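/- Let G be a finite connected simple graph on at least 3 vertices. If D'(G) = D(G) + 1, then G is a tree (i.e., G is acyclic). -/

import Mathlib

open SimpleGraph

/-- The distinguishing number of a simple graph `G`: the least `d` such that there is a
vertex labeling with `d` labels preserved only by the trivial automorphism. -/
noncomputable def distinguishingNumber {V : Type*} (G : SimpleGraph V) : ℕ :=
  sInf {d : ℕ | ∃ φ : V → Fin d,
    ∀ f : G ≃g G, (∀ x : V, φ (f x) = φ x) → ∀ x : V, f x = x}

/-- The distinguishing index of a simple graph `G`: the least `d` such that there is an
edge labeling with `d` labels preserved only by the trivial automorphism. -/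
noncomputable def distinguishingIndex {V : Type*} (G : SimpleGraph V) : ℕ :=
  sInf {d : ℕ | ∃ ψ : G.edgeSet → Fin d,
    ∀ f : G ≃g G, (∀ e : G.edgeSet, ψ (f.mapEdgeSet e) = ψ e) → ∀ x : V, f x = x}

/-!
It suffices to turn a distinguishing vertex labelling `φ` of a connected graph with a cycle into a
distinguishing edge labelling with the same labels.

With at least four labels, use two of them for a pattern on a cycle `C` that no automorphism
preserves, and give every vertex `v` outside `C` an edge towards `C` labelled `φ v`.

With two or three labels, the same device disposes of the vertices outside the 2-core, so let the
graph be leafless and the labels lie in the field `F` with two or three elements. If the graph is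
not a cycle, label each edge by the sum of the labels of its ends. This fails only if the graph has
a function `ε` alternating between `1` and `-1` along the edges with sum zero; then an automorphism
`f` preserving the sums shifts `φ` by a multiple of `ε`. Changing the label of one edge `e` allows
`φ ∘ f` to jump across `e` and `f⁻¹ e` only. To exclude such jumps, take a maximal proper set `X`
of vertices that is connected in `G - e` for every edge `e` that is not a bridge. Its complement is
either a single vertex, and `∑ v, φ (f v) = ∑ v, φ v` gives the contradiction, or the interior of an
induced path, and `f` must preserve `X`.
-/

section Stabilizers

variable {V L : Type*} {G : SimpleGraph V}

/-- The automorphisms of `G` that preserve the vertex labelling `φ`. A group `Γ` of automorphisms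
is distinguished by `φ` when it is disjoint from this subgroup. -/
def vertexStabilizer (G : SimpleGraph V) (φ : V → L) : Subgroup (G ≃g G) where
  carrier := {f | ∀ v, φ (f v) = φ v}
  mul_mem' {_ g} hf hg v := (hf (g v)).trans (hg v)
  one_mem' _ := rfl
  inv_mem' {f} hf v := by simpa using (hf (f⁻¹ v)).symm

/-- The automorphisms of `G` that preserve the edge labelling `ψ`. Labels are given to all unordered
pairs, but only those of the edges matter. -/
def edgeStabilizer (G : SimpleGraph V) (ψ : Sym2 V → L) : Subgroup (G ≃g G) where
  carrier := {f | ∀ u v, G.Adj u v → ψ s(f u, f v) = ψ s(u, v)}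
  mul_mem' {_ g} hf hg u v h := (hf (g u) (g v) (g.map_adj_iff.2 h)).trans (hg u v h)
  one_mem' _ _ _ := rfl
  inv_mem' {f} hf u v h := by
    simpa using (hf (f⁻¹ u) (f⁻¹ v) ((f⁻¹).map_adj_iff.2 h)).symm

end Stabilizers

section Reachability

variable {V α : Type*} {G : SimpleGraph V}

theorem eq_of_reachable {x : V → α} (hx : ∀ u v, G.Adj u v → x u = x v) {u v : V}
    (h : G.Reachable u v) : x u = x v := by
  obtain ⟨w⟩ := h
  induction w with
  | nil => rfl
  | cons hadj _ ih => exact (hx _ _ hadj).trans ih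

theorem induce_preconnected_iff {X : Set V} :
    (G.induce X).Preconnected ↔ ∀ P : V → Prop,
      (∀ u ∈ X, ∀ v ∈ X, G.Adj u v → P u → P v) → ∀ u ∈ X, ∀ v ∈ X, P u → P v := by
  constructor
  · intro h P hP u hu v hv
    refine (eq_of_reachable (G := G.induce X) (x := fun y => P y) ?_ (h ⟨u, hu⟩ ⟨v, hv⟩)).mp
    exact fun a b hab => propext ⟨hP a a.2 b b.2 hab, hP b b.2 a a.2 hab.symm⟩
  · rintro h ⟨u, hu⟩ ⟨v, hv⟩
    obtain ⟨_, hr⟩ := h (fun y => ∃ hy : y ∈ X, (G.induce X).Reachable ⟨u, hu⟩ ⟨y, hy⟩)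
      (fun a _ b hb hab ⟨_, hr⟩ => ⟨hb, hr.trans (Adj.reachable (by exact hab))⟩)
      u hu v hv ⟨hu, .rfl⟩
    exact hr

/-- On a path or a cycle an automorphism fixing two adjacent vertices is trivial, since the
images of the neighbours are determined one after the other. -/
theorem apply_eq_self_of_reachable {f : V → V} (hf : Function.Injective f)
    (hadj : ∀ u v, G.Adj u v → G.Adj (f u) (f v)) (hdeg : ∀ v, (G.neighborSet v).encard ≤ 2)
    {r a : V} (hra : G.Adj r a) (hr : f r = r) (ha : f a = a) {v : V} (hv : G.Reachable r v) :
    f v = v := by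
  let P (v : V) : Prop := f v = v ∧ ∃ w, G.Adj v w ∧ f w = w
  have step (u v : V) (huv : G.Adj u v) : P u → P v := by
    rintro ⟨hu, w, huw, hw⟩
    refine ⟨?_, u, huv.symm, hu⟩
    by_contra hne
    have hwv : w ≠ v := fun h => hne (h ▸ hw)
    have hwf : w ≠ f v := fun h => hwv (hf (hw.trans h))
    have hsub : ({w, v, f v} : Set V) ⊆ G.neighborSet u := by
      rintro _ (rfl | rfl | rfl)
      exacts [huw, huv, by simpa [hu] using hadj _ _ huv]
    have hcard : ({w, v, f v} : Set V).encard = 3 :=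
      Set.encard_eq_three.2 ⟨w, v, f v, hwv, hwf, Ne.symm hne, rfl⟩
    exact absurd ((hcard ▸ Set.encard_le_encard hsub).trans (hdeg u)) (by decide)
  have hPr : P r := ⟨hr, a, hra, ha⟩
  have hPv : P r = P v :=
    eq_of_reachable (fun u v huv => propext ⟨step u v huv, step v u huv.symm⟩) hv
  exact (hPv.mp hPr).1

end Reachability

section DistTo

variable {V : Type*} {G : SimpleGraph V} {K : Set V}

/-- The distance from the vertex `v` to the set `K`. It is meant for connected `G` and nonempty
`K`; otherwise the infimum and `SimpleGraph.dist` take junk values. -/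
noncomputable def distTo (G : SimpleGraph V) (K : Set V) (v : V) : ℕ :=
  ⨅ k : K, G.dist v k

theorem distTo_le (v : V) {k : V} (hk : k ∈ K) : distTo G K v ≤ G.dist v k :=
  ciInf_le' (fun k : K => G.dist v k) ⟨k, hk⟩

theorem exists_distTo_eq (hK : K.Nonempty) (v : V) : ∃ k ∈ K, distTo G K v = G.dist v k := by
  have := hK.to_subtype
  obtain ⟨⟨k, hk⟩, h⟩ := Nat.sInf_mem (Set.range_nonempty fun k : K => G.dist v k)
  exact ⟨k, hk, h.symm⟩

theorem distTo_eq_zero_iff (hG : G.Connected) (hK : K.Nonempty) {v : V} :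
    distTo G K v = 0 ↔ v ∈ K := by
  constructor
  · intro h
    obtain ⟨k, hk, hd⟩ := exists_distTo_eq (G := G) hK v
    rwa [(hG v k).dist_eq_zero_iff.1 (hd.symm.trans h)]
  · intro h
    simpa using distTo_le (G := G) v h

theorem distTo_le_succ_of_adj (hG : G.Connected) (hK : K.Nonempty) {u v : V} (h : G.Adj u v) :
    distTo G K u ≤ distTo G K v + 1 := by
  obtain ⟨k, hk, hd⟩ := exists_distTo_eq (G := G) hK v
  have htri : G.dist u k ≤ G.dist u v + G.dist v k := hG.dist_triangle
  have := distTo_le (G := G) u hk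
  rw [dist_eq_one_iff_adj.2 h] at htri
  omega

theorem exists_adj_distTo_add_one_eq (hG : G.Connected) (hK : K.Nonempty) {v : V} (hv : v ∉ K) :
    ∃ u, G.Adj v u ∧ distTo G K u + 1 = distTo G K v := by
  obtain ⟨k, hk, hd⟩ := exists_distTo_eq (G := G) hK v
  obtain ⟨w, hw⟩ := hG.exists_walk_length_eq_dist v k
  cases w with
  | nil => exact absurd hk hv
  | @cons _ u _ hadj p =>
    refine ⟨u, hadj, le_antisymm ?_ (distTo_le_succ_of_adj hG hK hadj)⟩
    have := (distTo_le u hk).trans (dist_le p)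
    rw [Walk.length_cons] at hw
    omega

theorem dist_apply_le {f : G ≃g G} (hG : G.Connected) (u v : V) :
    G.dist (f u) (f v) ≤ G.dist u v := by
  obtain ⟨w, hw⟩ := hG.exists_walk_length_eq_dist u v
  have := dist_le (w.map f.toHom)
  rwa [Walk.length_map, hw] at this

theorem distTo_apply {f : G ≃g G} (hG : G.Connected) (hK : K.Nonempty)
    (hf : ∀ v, f v ∈ K ↔ v ∈ K) (v : V) : distTo G K (f v) = distTo G K v := by
  have hle (g : G ≃g G) (hg : ∀ v, g v ∈ K ↔ v ∈ K) (v : V) :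
      distTo G K (g v) ≤ distTo G K v := by
    obtain ⟨k, hk, hd⟩ := exists_distTo_eq (G := G) hK v
    exact hd ▸ (distTo_le _ ((hg k).2 hk)).trans (dist_apply_le hG v k)
  refine le_antisymm (hle f hf v) ?_
  simpa using hle f⁻¹ (fun w => by simpa using (hf (f⁻¹ w)).symm) (f v)

theorem exists_geodesic_to (hG : G.Connected) (hK : K.Nonempty) (v : V) :
    ∃ t : ℕ → V, t (distTo G K v) = v ∧ (∀ i ≤ distTo G K v, distTo G K (t i) = i) ∧
      ∀ i < distTo G K v, G.Adj (t (i + 1)) (t i) := by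
  induction hn : distTo G K v generalizing v with
  | zero => exact ⟨fun _ => v, rfl, by simpa using hn, by simp⟩
  | succ n ih =>
    have hv : v ∉ K := fun h => by simp [(distTo_eq_zero_iff hG hK).2 h] at hn
    obtain ⟨u, hvu, hu⟩ := exists_adj_distTo_add_one_eq hG hK hv
    obtain ⟨t, htu, htd, hta⟩ := ih u (by omega)
    refine ⟨fun i => if i ≤ n then t i else v, by simp, fun i hi => ?_, fun i hi => ?_⟩
    · dsimp only
      split_ifs with h
      · exact htd i h
      · omega
    · rcases Nat.lt_succ_iff_lt_or_eq.1 hi with h | rfl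
      · simpa [h.le, Nat.succ_le_of_lt h] using hta i h
      · simpa [htu] using hvu

/-- `par` sends every vertex outside `K` to a neighbour that is closer to `K`. -/
def IsParentMap (G : SimpleGraph V) (K : Set V) (par : V → V) : Prop :=
  ∀ v ∉ K, G.Adj v (par v) ∧ distTo G K (par v) + 1 = distTo G K v

theorem exists_isParentMap (hG : G.Connected) (hK : K.Nonempty) : ∃ par, IsParentMap G K par := by
  have h (v : V) : ∃ u, v ∉ K → G.Adj v u ∧ distTo G K u + 1 = distTo G K v := by
    by_cases hv : v ∈ K
    · exact ⟨v, fun h => absurd hv h⟩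
    · obtain ⟨u, hu⟩ := exists_adj_distTo_add_one_eq hG hK hv
      exact ⟨u, fun _ => hu⟩
  choose par hpar using h
  exact ⟨par, hpar⟩

variable {L : Type*} {φ : V → L} {blank : L} {par : V → V}

/-- The edge labelling that copies the label of every vertex outside `K` to the edge leading to its
parent, and is `blank` on all other edges. -/
noncomputable def parentLabel (K : Set V) (par : V → V) (φ : V → L) (blank : L) : Sym2 V → L :=
  Function.extend (fun v : (Kᶜ : Set V) => s(↑v, par v)) (fun v => φ v) fun _ => blank

theorem IsParentMap.parentLabel_apply (hpar : IsParentMap G K par) {v : V} (hv : v ∉ K) :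
    parentLabel K par φ blank s(v, par v) = φ v := by
  have hinj : Function.Injective fun v : (Kᶜ : Set V) => s(↑v, par v) := by
    rintro ⟨u, hu⟩ ⟨w, hw⟩ h
    rcases Sym2.eq_iff.1 h with ⟨h, -⟩ | ⟨huw, hwu⟩
    · exact Subtype.ext h
    · have h1 := (hpar u hu).2
      have h2 := (hpar w hw).2
      simp only at huw hwu
      rw [hwu] at h1
      rw [← huw] at h2
      omega
  exact hinj.extend_apply _ _ (⟨v, hv⟩ : (Kᶜ : Set V))

theorem exists_eq_of_parentLabel_ne_blank {e : Sym2 V}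
    (h : parentLabel K par φ blank e ≠ blank) : ∃ v ∉ K, e = s(v, par v) := by
  by_contra! hne
  exact h (Function.extend_apply' _ _ _ fun ⟨⟨v, hv⟩, hve⟩ => hne v hv hve.symm)

theorem IsParentMap.parentLabel_eq_or_eq_blank (hpar : IsParentMap G K par) {v u : V}
    (h : distTo G K u + 1 = distTo G K v) :
    parentLabel K par φ blank s(v, u) = φ v ∨ parentLabel K par φ blank s(v, u) = blank := by
  by_contra! hne
  obtain ⟨w, hw, hwe⟩ := exists_eq_of_parentLabel_ne_blank hne.2
  rcases Sym2.eq_iff.1 hwe with ⟨rfl, rfl⟩ | ⟨rfl, rfl⟩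
  · exact hne.1 (hpar.parentLabel_apply hw)
  · have := (hpar u hw).2
    omega

/-- If `φ v` is not `blank`, the parent edge of `v` is labelled `φ v`, and so is its image, which
forces the label of `f v`; the blank vertices are treated by applying this to `f⁻¹`. -/
theorem IsParentMap.apply_eq_of_mem_edgeStabilizer (hpar : IsParentMap G K par)
    (hG : G.Connected) (hK : K.Nonempty) {ψ : Sym2 V → L}
    (hψ : ∀ v ∉ K, ∀ u, ψ s(v, u) = parentLabel K par φ blank s(v, u))
    {f : G ≃g G} (hf : f ∈ edgeStabilizer G ψ) (hfK : ∀ v, f v ∈ K ↔ v ∈ K)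
    {v : V} (hv : v ∉ K) : φ (f v) = φ v := by
  have key (g : G ≃g G) (hg : g ∈ edgeStabilizer G ψ) (hgK : ∀ v, g v ∈ K ↔ v ∈ K) (v : V)
      (hv : v ∉ K) (hb : φ v ≠ blank) : φ (g v) = φ v := by
    obtain ⟨hadj, hdist⟩ := hpar v hv
    have hlabel : parentLabel K par φ blank s(g v, g (par v)) = φ v := by
      rw [← hψ _ (mt (hgK v).1 hv), hg v _ hadj, hψ v hv, hpar.parentLabel_apply hv]
    rw [← distTo_apply hG hK hgK (par v), ← distTo_apply hG hK hgK v] at hdist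
    rcases hpar.parentLabel_eq_or_eq_blank (φ := φ) (blank := blank) hdist with h | h
    · exact h.symm.trans hlabel
    · exact absurd (hlabel.symm.trans h) hb
  by_cases hb : φ v = blank
  · by_cases hb' : φ (f v) = blank
    · rw [hb, hb']
    · have := key f⁻¹ (inv_mem hf) (fun w => by simpa using (hfK (f⁻¹ w)).symm) (f v)
        (mt (hfK v).1 hv) hb'
      simpa using this.symm
  · exact key f hf hfK v hv hb

end DistTo

section Core

variable {V : Type*} {G : SimpleGraph V}

/-- `A` induces a subgraph of `G` of minimum degree at least two. -/
def IsLeafless (G : SimpleGraph V) (A : Set V) : Prop :=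
  ∀ v ∈ A, (A ∩ G.neighborSet v).Nontrivial

/-- The 2-core of `G`, the largest set of vertices inducing a subgraph of minimum degree at least
two. -/
def core (G : SimpleGraph V) : Set V :=
  ⋃₀ {A | IsLeafless G A}

theorem IsLeafless.subset_core {A : Set V} (hA : IsLeafless G A) : A ⊆ core G :=
  Set.subset_sUnion_of_mem hA

theorem isLeafless_core : IsLeafless G (core G) := by
  rintro v ⟨A, hA, hv⟩
  exact (hA v hv).mono (Set.inter_subset_inter_left _ hA.subset_core)

theorem IsLeafless.image {A : Set V} (hA : IsLeafless G A) (f : G ≃g G) :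
    IsLeafless G (f '' A) := by
  rintro _ ⟨v, hv, rfl⟩
  refine ((hA v hv).image f.injective).mono ?_
  rintro _ ⟨u, ⟨hu, hvu⟩, rfl⟩
  exact ⟨⟨u, hu, rfl⟩, f.map_adj_iff.2 hvu⟩

theorem apply_mem_core_iff (f : G ≃g G) {v : V} : f v ∈ core G ↔ v ∈ core G := by
  have himp (g : G ≃g G) {w : V} (hw : w ∈ core G) : g w ∈ core G :=
    (isLeafless_core.image g).subset_core ⟨w, hw, rfl⟩
  exact ⟨fun h => by simpa using himp f⁻¹ h, himp f⟩

theorem exists_cycleSubgraph (h : ¬ G.IsAcyclic) :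
    ∃ C : G.Subgraph, C.Connected ∧ ∀ v ∈ C.verts, (C.neighborSet v).encard = 2 := by
  simp only [IsAcyclic, not_forall, not_not] at h
  obtain ⟨r, c, hc⟩ := h
  refine ⟨c.toSubgraph, c.toSubgraph_connected, fun v hv => ?_⟩
  exact Set.encard_eq_two.2 (Set.ncard_eq_two.1
    (hc.ncard_neighborSet_toSubgraph_eq_two (c.mem_verts_toSubgraph.1 hv)))

theorem isLeafless_verts_of_encard_eq_two {M : SimpleGraph V} {C : G.Subgraph}
    (hCM : C.spanningCoe ≤ M) (hC : ∀ v ∈ C.verts, (C.neighborSet v).encard = 2) :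
    IsLeafless M C.verts := by
  intro v hv
  have hnt : (C.neighborSet v).Nontrivial :=
    Set.one_lt_encard_iff_nontrivial.1 (by rw [hC v hv]; decide)
  refine hnt.mono fun u hu => ?_
  exact ⟨C.edge_vert hu.symm, hCM hu⟩

theorem core_nonempty (h : ¬ G.IsAcyclic) : (core G).Nonempty := by
  obtain ⟨C, hC, hdeg⟩ := exists_cycleSubgraph h
  exact hC.nonempty.mono (isLeafless_verts_of_encard_eq_two C.spanningCoe_le hdeg).subset_core

theorem isLeafless_core_union_support {u v : V} (hu : u ∈ core G) (hv : v ∈ core G)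
    {p : G.Walk u v} (hp : p.IsPath) : IsLeafless G (core G ∪ {x | x ∈ p.support}) := by
  intro x hx
  by_cases hxc : x ∈ core G
  · exact (isLeafless_core x hxc).mono (Set.inter_subset_inter_left _ Set.subset_union_left)
  obtain ⟨i, rfl, hi⟩ := Walk.mem_support_iff_exists_getVert.1 (hx.resolve_left hxc)
  have hi0 : i ≠ 0 := by
    rintro rfl
    exact hxc (by simpa using hu)
  have hil : i ≠ p.length := by
    rintro rfl
    exact hxc (by simpa using hv)
  have hcard := hp.ncard_neighborSet_toSubgraph_internal_eq_two hi0 (lt_of_le_of_ne hi hil)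
  obtain ⟨y, z, hyz, heq⟩ := Set.ncard_eq_two.1 hcard
  refine (heq ▸ Set.nontrivial_pair hyz : (p.toSubgraph.neighborSet _).Nontrivial).mono ?_
  exact fun w hw => ⟨Or.inr (p.mem_verts_toSubgraph.1 (p.toSubgraph.edge_vert hw.symm)),
    p.toSubgraph.adj_sub hw⟩

theorem induce_core_connected (hG : G.Connected) (h : ¬ G.IsAcyclic) :
    (G.induce (core G)).Connected := by
  have := (core_nonempty h).to_subtype
  refine .mk fun ⟨u, hu⟩ ⟨v, hv⟩ => ?_
  obtain ⟨p, hp⟩ := (hG u v).exists_isPath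
  exact ⟨p.induce (core G) fun x hx =>
    (isLeafless_core_union_support hu hv hp).subset_core (Or.inr hx)⟩

theorem nontrivial_neighborSet_induce_core (v : core G) :
    ((G.induce (core G)).neighborSet v).Nontrivial := by
  obtain ⟨x, ⟨hx, hvx⟩, y, ⟨hy, hvy⟩, hxy⟩ := isLeafless_core (G := G) v v.2
  exact ⟨⟨x, hx⟩, hvx, ⟨y, hy⟩, hvy, fun h => hxy congr($h)⟩

/-- The restriction of automorphisms to the 2-core. -/
def coreRestrict : (G ≃g G) →* (G.induce (core G) ≃g G.induce (core G)) where
  toFun f := ⟨f.toEquiv.subtypeEquiv fun _ => (apply_mem_core_iff f).symm, f.map_adj_iff⟩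
  map_one' := rfl
  map_mul' _ _ := rfl

/-- The pendant trees take care of themselves: their vertex labels can be moved to the edges towards
the core. What remains is to distinguish the automorphisms of the core that are induced by an
automorphism preserving the vertex labels off the core. -/
theorem exists_edgeStabilizer_eq_bot_of_core {L : Type*} {φ : V → L} (hG : G.Connected)
    (hcyc : ¬ G.IsAcyclic) (hφ : vertexStabilizer G φ = ⊥)
    (hcore : ∀ Γ : Subgroup (G.induce (core G) ≃g G.induce (core G)),
      Disjoint Γ (vertexStabilizer _ fun v => φ v) →
        ∃ ψ : Sym2 (core G) → L, Disjoint Γ (edgeStabilizer _ ψ)) :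
    ∃ ψ : Sym2 V → L, edgeStabilizer G ψ = ⊥ := by
  classical
  have hK := core_nonempty hcyc
  obtain ⟨par, hpar⟩ := exists_isParentMap hG hK
  let Γ := (vertexStabilizer G fun v => if v ∈ core G then none else some (φ v)).map coreRestrict
  have hmem {f : G ≃g G} (hoff : ∀ v ∉ core G, φ (f v) = φ v) : coreRestrict f ∈ Γ := by
    refine ⟨f, fun v => ?_, rfl⟩
    by_cases hv : v ∈ core G <;> simp [apply_mem_core_iff, hv, hoff]
  have heq_one {f : G ≃g G} (hoff : ∀ v ∉ core G, φ (f v) = φ v)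
      (hon : ∀ v ∈ core G, φ (f v) = φ v) : f = 1 := by
    rw [← Subgroup.mem_bot, ← hφ]
    exact fun v => (em (v ∈ core G)).elim (hon v) (hoff v)
  obtain ⟨ψ₀, hψ₀⟩ := hcore Γ <| Subgroup.disjoint_def.2 <| by
    rintro _ ⟨f, hf, rfl⟩ hon
    rw [heq_one (f := f) (fun v hv => ?_) fun v hv => hon ⟨v, hv⟩, map_one]
    simpa [apply_mem_core_iff, hv] using hf v
  let ψ : Sym2 V → L := Function.extend (Sym2.map Subtype.val) ψ₀
    (parentLabel (core G) par φ (φ hK.some))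
  have hψ_on (u v : core G) : ψ s(↑u, ↑v) = ψ₀ s(u, v) :=
    (Sym2.map.injective Subtype.val_injective).extend_apply _ _ s(u, v)
  have hψ_off (v : V) (hv : v ∉ core G) (u : V) :
      ψ s(v, u) = parentLabel (core G) par φ (φ hK.some) s(v, u) := by
    refine Function.extend_apply' _ _ _ fun ⟨e, he⟩ => hv ?_
    obtain ⟨⟨x, hx⟩, -, rfl⟩ := Sym2.mem_map.1 (he ▸ Sym2.mem_mk_left v u)
    exact hx
  refine ⟨ψ, (Subgroup.eq_bot_iff_forall _).2 fun f hf => ?_⟩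
  have hoff (v : V) (hv : v ∉ core G) : φ (f v) = φ v :=
    hpar.apply_eq_of_mem_edgeStabilizer hG hK hψ_off hf (fun _ => apply_mem_core_iff f) hv
  have hone : coreRestrict f = 1 := Subgroup.disjoint_def.1 hψ₀ (hmem hoff) fun u v huv =>
    (hψ_on _ _).symm.trans ((hf u v huv).trans (hψ_on u v))
  exact heq_one hoff fun v hv => congr(φ ($hone ⟨v, hv⟩))

end Core

section FourLabels

variable {V L : Type*} {G : SimpleGraph V}

theorem core_eq_of_pendant [Finite V] {M : SimpleGraph V} {K : Set V} {par : V → V}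
    (hK : IsLeafless M K) (hpar : IsParentMap G K par)
    (h : ∀ v ∉ K, ∀ u, M.Adj v u → ∃ w ∉ K, s(v, u) = s(w, par w)) : core M = K := by
  refine Set.Subset.antisymm (fun v hv => ?_) hK.subset_core
  by_contra hvK
  obtain ⟨v, ⟨hv, hvK⟩, hmax⟩ := Set.exists_max_image (core M \ K) (distTo G K)
    (Set.toFinite _) ⟨v, hv, hvK⟩
  refine (isLeafless_core v hv).not_subset_singleton (x := par v) fun u ⟨hu, hvu⟩ => ?_
  obtain ⟨w, hw, hvw⟩ := h v hvK u hvu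
  rcases Sym2.eq_iff.1 hvw with ⟨rfl, rfl⟩ | ⟨hvw, rfl⟩
  · rfl
  · have hlt := (hpar u hw).2
    have hle := hmax u ⟨hu, hw⟩
    rw [hvw] at hle
    omega

theorem apply_eq_self_of_distinct_labels {C : G.Subgraph} (hC : C.Connected)
    (hdeg : ∀ v ∈ C.verts, (C.neighborSet v).encard = 2) {ψ : Sym2 V → L} {r a b : V}
    (hra : C.Adj r a) (hrb : C.Adj r b) (hab : a ≠ b)
    (ha : ∀ e ∈ C.edgeSet, ψ e = ψ s(r, a) → e = s(r, a))
    (hb : ∀ e ∈ C.edgeSet, ψ e = ψ s(r, b) → e = s(r, b))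
    {f : V → V} (hf : Function.Injective f) (hadj : ∀ u v, C.Adj u v → C.Adj (f u) (f v))
    (hψ : ∀ u v, C.Adj u v → ψ s(f u, f v) = ψ s(u, v)) {v : V} (hv : v ∈ C.verts) :
    f v = v := by
  have hfa := ha s(f r, f a) (hadj r a hra) (hψ r a hra)
  have hfb := hb s(f r, f b) (hadj r b hrb) (hψ r b hrb)
  have hr : f r = r := by
    rcases Sym2.eq_iff.1 hfa with ⟨h, -⟩ | ⟨h, -⟩
    · exact h
    · exact ((Sym2.eq_iff.1 hfb).resolve_right fun h' => hab (h.symm.trans h'.1)).1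
  have hfaa : f a = a := by
    rwa [hr, Sym2.congr_right] at hfa
  refine apply_eq_self_of_reachable (G := C.spanningCoe) hf hadj (fun u => ?_) hra hr hfaa
    ((hC.coe ⟨r, C.edge_vert hra⟩ ⟨v, hv⟩).map C.coeEmbeddingSpanningCoe.toHom)
  change (C.neighborSet u).encard ≤ 2
  by_cases hu : u ∈ C.verts
  · exact (hdeg u hu).le
  · have hempty : C.neighborSet u = ∅ :=
      Set.eq_empty_of_forall_notMem fun w hw => hu (C.edge_vert hw)
    simp [hempty]

/-- The edges with a nonblank label form `C` with trees attached, whose 2-core is `C`. -/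
theorem apply_mem_verts_iff_of_parentLabel [Finite V] {C : G.Subgraph}
    (hdeg : ∀ v ∈ C.verts, (C.neighborSet v).encard = 2) {par : V → V}
    (hpar : IsParentMap G C.verts par) {φ : V → L} {blank : L} {ψ : Sym2 V → L}
    (hψC : ∀ e ∈ C.edgeSet, ψ e ≠ blank)
    (hψ : ∀ e ∉ C.edgeSet, ψ e = parentLabel C.verts par φ blank e)
    {f : G ≃g G} (hf : f ∈ edgeStabilizer G ψ) :
    (∀ v, f v ∈ C.verts ↔ v ∈ C.verts) ∧ ∀ u v, C.Adj u v → C.Adj (f u) (f v) := by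
  let M := G.deleteEdges (ψ ⁻¹' {blank})
  have hM {u v : V} : M.Adj u v ↔ G.Adj u v ∧ ψ s(u, v) ≠ blank := by
    simp [M, deleteEdges_adj]
  have hCM : C.spanningCoe ≤ M := fun u v h => hM.2 ⟨C.adj_sub h, hψC _ h⟩
  have hMC {u v : V} (h : M.Adj u v) :
      C.Adj u v ∨ ∃ w ∉ C.verts, s(u, v) = s(w, par w) := by
    refine or_iff_not_imp_left.2 fun hC => ?_
    exact exists_eq_of_parentLabel_ne_blank (hψ s(u, v) hC ▸ (hM.1 h).2)
  have hcore : core M = C.verts :=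
    core_eq_of_pendant (isLeafless_verts_of_encard_eq_two hCM hdeg) hpar fun v hv u hvu =>
      (hMC hvu).resolve_left fun h => hv (C.edge_vert h)
  have hfM (u v : V) : M.Adj (f u) (f v) ↔ M.Adj u v := by
    rw [hM, hM, f.map_adj_iff]
    exact and_congr_right fun h => by rw [hf u v h]
  let g : M ≃g M := ⟨f.toEquiv, fun {u v} => hfM u v⟩
  have hverts (v : V) : f v ∈ C.verts ↔ v ∈ C.verts := hcore ▸ apply_mem_core_iff g
  refine ⟨hverts, fun u v huv => ?_⟩
  refine (hMC (g.map_adj_iff.2 (hCM huv))).resolve_right ?_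
  rintro ⟨w, hw, hwe⟩
  rcases Sym2.eq_iff.1 hwe with ⟨h, -⟩ | ⟨-, h⟩
  · exact hw (h ▸ (hverts u).2 (C.edge_vert huv))
  · exact hw (h ▸ (hverts v).2 (C.edge_vert huv.symm))

theorem exists_edgeStabilizer_eq_bot_of_four_labels [Finite V] (hG : G.Connected)
    (hcyc : ¬ G.IsAcyclic) (l : Fin 4 ↪ L) {φ : V → L} (hφ : vertexStabilizer G φ = ⊥) :
    ∃ ψ : Sym2 V → L, edgeStabilizer G ψ = ⊥ := by
  classical
  obtain ⟨C, hC, hdeg⟩ := exists_cycleSubgraph hcyc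
  obtain ⟨r, hr⟩ := hC.nonempty
  obtain ⟨par, hpar⟩ := exists_isParentMap hG ⟨r, hr⟩
  obtain ⟨a, b, hab, hN⟩ := Set.encard_eq_two.1 (hdeg r hr)
  have hra : a ∈ C.neighborSet r := by simp [hN]
  have hrb : b ∈ C.neighborSet r := by simp [hN]
  have hne : s(r, a) ≠ s(r, b) := fun h => hab (Sym2.congr_right.1 h)
  let ψ (e : Sym2 V) : L :=
    if e = s(r, a) then l 1 else if e = s(r, b) then l 2 else if e ∈ C.edgeSet then l 3 else
      parentLabel C.verts par φ (l 0) e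
  have hψa : ∀ e ∈ C.edgeSet, ψ e = ψ s(r, a) → e = s(r, a) := by
    intro e he
    simp only [ψ]
    split_ifs <;> simp_all
  have hψb : ∀ e ∈ C.edgeSet, ψ e = ψ s(r, b) → e = s(r, b) := by
    intro e he
    simp only [ψ]
    split_ifs <;> simp_all
  have hψC : ∀ e ∈ C.edgeSet, ψ e ≠ l 0 := by
    intro e he
    simp only [ψ]
    split_ifs <;> simp
  have hψ : ∀ e ∉ C.edgeSet, ψ e = parentLabel C.verts par φ (l 0) e := by
    intro e he
    have hea : e ≠ s(r, a) := by rintro rfl; exact he hra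
    have heb : e ≠ s(r, b) := by rintro rfl; exact he hrb
    simp only [ψ, if_neg hea, if_neg heb, if_neg he]
  refine ⟨ψ, (Subgroup.eq_bot_iff_forall _).2 fun f hf => ?_⟩
  obtain ⟨hverts, hadj⟩ := apply_mem_verts_iff_of_parentLabel hdeg hpar hψC hψ hf
  rw [← Subgroup.mem_bot, ← hφ]
  intro v
  by_cases hv : v ∈ C.verts
  · rw [apply_eq_self_of_distinct_labels hC hdeg hra hrb hab hψa hψb f.injective hadj
      (fun u w h => hf u w (C.adj_sub h)) hv]
  · exact hpar.apply_eq_of_mem_edgeStabilizer hG ⟨r, hr⟩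
      (fun w hw u => hψ _ fun h => hw (C.edge_vert h)) hf hverts hv

end FourLabels

section Cycles

variable {V L : Type*} {G : SimpleGraph V} {Γ : Subgroup (G ≃g G)}

theorem exists_ne_one_of_not_disjoint {H : Type*} [Group H] {A B : Subgroup H}
    (h : ¬ Disjoint A B) : ∃ f ∈ A, f ∈ B ∧ f ≠ 1 := by
  simpa [Subgroup.disjoint_def] using h

theorem exists_ne_one_preserving_edges [Nontrivial L]
    (hΓ : ∀ ψ : Sym2 V → L, ¬ Disjoint Γ (edgeStabilizer G ψ)) (S : Set (Sym2 V)) :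
    ∃ f ∈ Γ, f ≠ 1 ∧ ∀ u v, G.Adj u v → (s(f u, f v) ∈ S ↔ s(u, v) ∈ S) := by
  classical
  obtain ⟨x, y, hxy⟩ := exists_pair_ne L
  obtain ⟨f, hfΓ, hf, hne⟩ := exists_ne_one_of_not_disjoint (hΓ fun e => if e ∈ S then x else y)
  refine ⟨f, hfΓ, hne, fun u v huv => ?_⟩
  have := hf u v huv
  dsimp only at this
  split_ifs at this <;> simp_all

theorem eq_one_of_apply_eq_self (hG : G.Connected) (hdeg : ∀ v, (G.neighborSet v).encard ≤ 2)
    {f : G ≃g G} {r a : V} (hra : G.Adj r a) (hr : f r = r) (ha : f a = a) : f = 1 :=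
  RelIso.ext fun v => apply_eq_self_of_reachable f.injective (fun _ _ => f.map_adj_iff.2) hdeg
    hra hr ha (hG r v)

/-- Marking one edge fails only if some automorphism in `Γ` reverses it; marking two consecutive
edges fails only if some automorphism in `Γ` swaps them. The product of these two reflections is
a rotation. -/
theorem exists_rotation [Nontrivial L] (hG : G.Connected)
    (hdeg : ∀ v, (G.neighborSet v).encard = 2)
    (hΓ : ∀ ψ : Sym2 V → L, ¬ Disjoint Γ (edgeStabilizer G ψ)) {r a b : V} (hab : a ≠ b)
    (hN : G.neighborSet r = {a, b}) : ∃ h ∈ Γ, h r = a ∧ h b = r := by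
  have hdeg' (v : V) : (G.neighborSet v).encard ≤ 2 := (hdeg v).le
  have hra : a ∈ G.neighborSet r := by simp [hN]
  have hrb : b ∈ G.neighborSet r := by simp [hN]
  obtain ⟨ρ, hρ, hρ1, hρS⟩ := exists_ne_one_preserving_edges hΓ {s(r, a)}
  obtain ⟨hρr, hρa⟩ : ρ r = a ∧ ρ a = r := by
    refine (Sym2.eq_iff.1 ((hρS r a hra).2 rfl)).resolve_left fun ⟨hr, ha⟩ => hρ1 ?_
    exact eq_one_of_apply_eq_self hG hdeg' hra hr ha
  obtain ⟨σ, hσ, hσ1, hσS⟩ := exists_ne_one_preserving_edges hΓ {s(r, a), s(r, b)}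
  have hσra := (hσS r a hra).2 (Or.inl rfl)
  have hσrb := (hσS r b hrb).2 (Or.inr rfl)
  have hσab : σ a ≠ σ b := σ.injective.ne hab
  have hσr : σ r = r := by
    simp only [Set.mem_insert_iff, Set.mem_singleton_iff, Sym2.eq_iff] at hσra hσrb
    grind [G.ne_of_adj hra, G.ne_of_adj hrb]
  have hσb : σ b = a := by
    have hσa : σ a ≠ a := fun ha => hσ1 (eq_one_of_apply_eq_self hG hdeg' hra hσr ha)
    simp only [hσr, Set.mem_insert_iff, Set.mem_singleton_iff, Sym2.congr_right] at hσra hσrb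
    grind
  exact ⟨ρ * σ, mul_mem hρ hσ, (congrArg ρ hσr).trans hρr, (congrArg ρ hσb).trans hρa⟩

theorem neighborSet_eq_of_rotation (hG : G.Connected)
    (hdeg : ∀ v, (G.neighborSet v).encard = 2) {h : G ≃g G} {r a b : V}
    (hN : G.neighborSet r = {a, b}) (hr : h r = a) (hb : h b = r) (v : V) :
    h v ≠ h⁻¹ v ∧ G.neighborSet v = {h v, h⁻¹ v} := by
  let P (v : V) : Prop := G.neighborSet v = {h v, h⁻¹ v}
  have map (g : G ≃g G) (hg : ∀ x, g (h x) = h (g x) ∧ g (h⁻¹ x) = h⁻¹ (g x)) (u : V) (hu : P u) :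
      P (g u) := by
    simp only [P] at hu ⊢
    rw [← Iso.image_neighborSet, hu, Set.image_pair, (hg u).1, (hg u).2]
  have step (u v : V) (huv : G.Adj u v) (hu : P u) : P v := by
    have hv : v ∈ ({h u, h⁻¹ u} : Set V) := hu ▸ huv
    rcases hv with rfl | rfl
    · exact map h (fun x => ⟨rfl, by simp⟩) u hu
    · exact map h⁻¹ (fun x => ⟨by simp, rfl⟩) u hu
  have hbr : h⁻¹ r = b := by
    rw [← hb, RelIso.inv_apply_self]
  have hPr : P r := by
    simp only [P, hN, hr, hbr]
  have hPv : P v :=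
    (eq_of_reachable (fun u v huv => propext ⟨step u v huv, step v u huv.symm⟩) (hG r v)).mp hPr
  refine ⟨fun heq => ?_, hPv⟩
  have := hdeg v
  rw [hPv, ← heq, Set.pair_eq_singleton, Set.encard_singleton] at this
  exact absurd this (by decide)

/-- Orienting the cycle by the rotation `h`, give every edge the label of its tail. An automorphism
`γ` preserving these labels either respects the orientation, and preserves `φ`, or reverses it, and
then `h⁻¹ * γ` preserves `φ`. -/
theorem exists_disjoint_edgeStabilizer_of_rotation {φ : V → L}
    (hφ : Disjoint Γ (vertexStabilizer G φ)) (hG : G.Connected) {h : G ≃g G} (hh : h ∈ Γ)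
    (hne : ∀ v, h v ≠ h⁻¹ v) (hN : ∀ v, G.neighborSet v = {h v, h⁻¹ v}) :
    ∃ ψ : Sym2 V → L, Disjoint Γ (edgeStabilizer G ψ) := by
  obtain ⟨r⟩ := hG.nonempty
  have hinj : Function.Injective fun v => s(v, h v) := by
    intro u v huv
    refine (Sym2.eq_iff.1 huv).elim And.left fun ⟨hu, hv⟩ => absurd ?_ (hne u)
    rw [hu, RelIso.inv_apply_self, ← hu, hv]
  let ψ : Sym2 V → L := Function.extend (fun v => s(v, h v)) φ fun _ => φ r
  have hψ (v : V) : ψ s(v, h v) = φ v := hinj.extend_apply _ _ v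
  have hadj (v : V) : G.Adj v (h v) := by simp [← mem_neighborSet, hN]
  refine ⟨ψ, Subgroup.disjoint_def.2 fun {γ} hγ hγψ => ?_⟩
  let P (v : V) : Prop := γ (h v) = h (γ v)
  have turn (v : V) : P v ∨ γ (h v) = h⁻¹ (γ v) := by
    simpa [hN] using (show γ (h v) ∈ G.neighborSet (γ v) from γ.map_adj_iff.2 (hadj v))
  have step (v : V) : P v ↔ P (h v) := by
    have hback : γ (h (h v)) ≠ γ v := fun h' => hne (h v) (by simpa using h')
    constructor
    · refine fun hv => (turn (h v)).resolve_right fun h' => hback ?_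
      rw [h', hv, RelIso.inv_apply_self]
    · refine fun hv => (turn v).resolve_right fun h' => hback ?_
      rw [hv, h', RelIso.apply_inv_self]
  have hP (v : V) : P r ↔ P v := by
    refine iff_of_eq (eq_of_reachable (fun u w huw => propext ?_) (hG r v))
    have hw : w = h u ∨ w = h⁻¹ u := by simpa [hN] using (show w ∈ G.neighborSet u from huw)
    rcases hw with rfl | rfl
    · exact step u
    · simpa using (step (h⁻¹ u)).symm
  by_cases hr : P r
  · refine Subgroup.disjoint_def.1 hφ hγ fun v => ?_
    rw [← hψ, ← (hP v).1 hr, hγψ v _ (hadj v), hψ]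
  · have hrev (v : V) : γ (h v) = h⁻¹ (γ v) := (turn v).resolve_left (mt (hP v).2 hr)
    have hpres : h⁻¹ * γ ∈ vertexStabilizer G φ := fun v => by
      have := hψ (h⁻¹ (γ v))
      rw [RelIso.apply_inv_self, ← hrev, Sym2.eq_swap, hγψ v _ (hadj v), hψ] at this
      exact (congrArg φ (hrev v)).symm.trans this.symm
    have hγh : h = γ :=
      inv_mul_eq_one.1 (Subgroup.disjoint_def.1 hφ (mul_mem (inv_mem hh) hγ) hpres)
    refine absurd (hrev r) ?_
    rw [← hγh, RelIso.inv_apply_self]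
    exact fun h' => hne (h r) (by simpa using h')

theorem exists_disjoint_edgeStabilizer_of_cycle [Nontrivial L] {φ : V → L}
    (hφ : Disjoint Γ (vertexStabilizer G φ)) (hG : G.Connected)
    (hdeg : ∀ v, (G.neighborSet v).encard = 2) :
    ∃ ψ : Sym2 V → L, Disjoint Γ (edgeStabilizer G ψ) := by
  by_contra! hΓ
  obtain ⟨r⟩ := hG.nonempty
  obtain ⟨a, b, hab, hN⟩ := Set.encard_eq_two.1 (hdeg r)
  obtain ⟨h, hh, hr, hb⟩ := exists_rotation hG hdeg hΓ hab hN
  have hrot := neighborSet_eq_of_rotation hG hdeg hN hr hb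
  obtain ⟨ψ, hψ⟩ := exists_disjoint_edgeStabilizer_of_rotation hφ hG hh (fun v => (hrot v).1)
    fun v => (hrot v).2
  exact hΓ ψ hψ

end Cycles

section SumLabel

variable {V F : Type*} [Field F] {G : SimpleGraph V} {Γ : Subgroup (G ≃g G)} {φ ε : V → F}

/-- The edge labelling assigning to each edge the sum of the labels of its ends. -/
def sumLabel (φ : V → F) : Sym2 V → F :=
  Sym2.lift ⟨fun u v => φ u + φ v, fun _ _ => add_comm _ _⟩

theorem sumLabel_mk (u v : V) : sumLabel φ s(u, v) = φ u + φ v :=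
  rfl

/-- A function with values in `{1, -1}` that changes sign along every edge. Over a field of
characteristic two it is constant. -/
structure IsSignAlternating (G : SimpleGraph V) (ε : V → F) : Prop where
  mul_self : ∀ v, ε v * ε v = 1
  eq_neg : ∀ u v, G.Adj u v → ε v = -ε u

/-- The change of the label of `v` under `f`, normalized by the sign `ε v`. -/
def displacement (φ ε : V → F) (f : V → V) (v : V) : F :=
  ε v * (φ (f v) - φ v)

/-- If the sum labelling does not distinguish `Γ`, then it is preserved by a nontrivial `t ∈ Γ`, and
`φ ∘ t - φ` alternates. -/
theorem exists_isSignAlternating [Fintype V] (hF : ∀ x : F, x ≠ 0 → x * x = 1)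
    (hG : G.Connected) (hφ : Disjoint Γ (vertexStabilizer G φ))
    (hsum : ¬ Disjoint Γ (edgeStabilizer G (sumLabel φ))) :
    ∃ ε : V → F, IsSignAlternating G ε ∧ ∑ v, ε v = 0 := by
  obtain ⟨t, htΓ, ht, hne⟩ := exists_ne_one_of_not_disjoint hsum
  have hneg (u v : V) (h : G.Adj u v) : φ (t v) - φ v = -(φ (t u) - φ u) := by
    have := ht u v h
    simp only [sumLabel_mk] at this
    linear_combination this
  have hne0 (v : V) : φ (t v) - φ v ≠ 0 := by
    intro hv
    refine hne (Subgroup.disjoint_def.1 hφ htΓ fun u => sub_eq_zero.1 ?_)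
    have hiff := eq_of_reachable (x := fun v => φ (t v) - φ v = 0)
      (fun u v h => by rw [hneg u v h, neg_eq_zero]) (hG v u)
    exact hiff.mp hv
  refine ⟨fun v => φ (t v) - φ v, ⟨fun v => hF _ (hne0 v), hneg⟩, ?_⟩
  rw [Finset.sum_sub_distrib, sub_eq_zero]
  exact Equiv.sum_comp t.toEquiv φ

namespace IsSignAlternating

theorem ne_zero (hε : IsSignAlternating G ε) (v : V) : ε v ≠ 0 :=
  left_ne_zero_of_mul_eq_one (hε.mul_self v)

theorem apply_eq (hε : IsSignAlternating G ε) (f : V → V) (v : V) :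
    φ (f v) = φ v + ε v * displacement φ ε f v := by
  rw [displacement]
  linear_combination (φ v - φ (f v)) * hε.mul_self v

theorem displacement_eq_zero_iff (hε : IsSignAlternating G ε) {f : V → V} {v : V} :
    displacement φ ε f v = 0 ↔ φ (f v) = φ v := by
  simp [displacement, hε.ne_zero v, sub_eq_zero]

theorem displacement_eq_iff (hε : IsSignAlternating G ε) (f : V → V) {u v : V} (h : G.Adj u v) :
    displacement φ ε f u = displacement φ ε f v ↔
      sumLabel φ s(f u, f v) = sumLabel φ s(u, v) := by
  have hsub : displacement φ ε f u - displacement φ ε f v =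
      ε u * (sumLabel φ s(f u, f v) - sumLabel φ s(u, v)) := by
    simp only [displacement, sumLabel_mk, hε.eq_neg u v h]
    ring
  rw [← sub_eq_zero, hsub, mul_eq_zero, or_iff_right (hε.ne_zero u), sub_eq_zero]

theorem displacement_eq (hε : IsSignAlternating G ε) (hG : G.Connected) {f : G ≃g G}
    (hf : f ∈ edgeStabilizer G (sumLabel φ)) (u v : V) :
    displacement φ ε f u = displacement φ ε f v :=
  eq_of_reachable (fun _ _ h => (hε.displacement_eq_iff f h).2 (hf _ _ h)) (hG u v)

theorem eq_one_of_apply_eq_self (hε : IsSignAlternating G ε) (hG : G.Connected)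
    (hφ : Disjoint Γ (vertexStabilizer G φ)) {f : G ≃g G} (hfΓ : f ∈ Γ)
    (hf : f ∈ edgeStabilizer G (sumLabel φ)) {u : V} (hu : f u = u) : f = 1 := by
  refine Subgroup.disjoint_def.1 hφ hfΓ fun v => hε.displacement_eq_zero_iff.1 ?_
  rw [hε.displacement_eq hG hf v u, hε.displacement_eq_zero_iff, hu]

theorem apply_eq_neg_of_reverses (hε : IsSignAlternating G ε) (hG : G.Connected) {f : G ≃g G}
    {u w : V} (huw : G.Adj u w) (hu : f u = w) (v : V) : ε (f v) = -ε v := by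
  have h := eq_of_reachable (x := fun v => ε (f v) = -ε v)
    (fun a b hab => by
      rw [hε.eq_neg a b hab, hε.eq_neg _ _ (f.map_adj_iff.2 hab), neg_inj]) (hG u v)
  exact h.mp (by rw [hu, hε.eq_neg u w huw])

theorem exists_shift_of_reverses (hε : IsSignAlternating G ε) (hG : G.Connected)
    (hφ : Disjoint Γ (vertexStabilizer G φ)) {f : G ≃g G} (hfΓ : f ∈ Γ)
    (hf : f ∈ edgeStabilizer G (sumLabel φ)) {u w : V} (huw : G.Adj u w) (hu : f u = w)
    (hw : f w = u) : f * f = 1 ∧ ∃ c ≠ 0, ∀ v, φ (f v) = φ v + ε v * c := by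
  refine ⟨hε.eq_one_of_apply_eq_self hG hφ (mul_mem hfΓ hfΓ) (mul_mem hf hf)
    ((congrArg f hu).trans hw), displacement φ ε f u, fun h0 => ?_, fun v => ?_⟩
  · have hone : f = 1 := Subgroup.disjoint_def.1 hφ hfΓ fun v => by
      rw [← hε.displacement_eq_zero_iff, hε.displacement_eq hG hf v u, h0]
    exact G.ne_of_adj huw (hu ▸ congr($hone.symm u))
  · rw [hε.apply_eq (φ := φ) f, hε.displacement_eq hG hf v u]

/-- Let `f` and `g` shift `φ` by `c • ε` and `d • ε`. If `c = d` then `f * g` preserves `φ`; if not,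
then `F` has three elements, `d = -c`, and `f * g * f` shifts `φ` by `(2 * c - d) • ε = 0`. -/
theorem eq_of_reverses (hF : ∀ x : F, x ≠ 0 → x * x = 1)
    (hε : IsSignAlternating G ε) (hG : G.Connected) (hφ : Disjoint Γ (vertexStabilizer G φ))
    {f g : G ≃g G} (hfΓ : f ∈ Γ) (hgΓ : g ∈ Γ) (hf : f ∈ edgeStabilizer G (sumLabel φ))
    (hg : g ∈ edgeStabilizer G (sumLabel φ)) {u w w' : V} (huw : G.Adj u w) (huw' : G.Adj u w')
    (hfu : f u = w) (hfw : f w = u) (hgu : g u = w') (hgw : g w' = u) : f = g := by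
  obtain ⟨hff, c, hc0, hfφ⟩ := hε.exists_shift_of_reverses hG hφ hfΓ hf huw hfu hfw
  obtain ⟨hgg, d, hd0, hgφ⟩ := hε.exists_shift_of_reverses hG hφ hgΓ hg huw' hgu hgw
  have hfε := hε.apply_eq_neg_of_reverses hG huw hfu
  have hgε := hε.apply_eq_neg_of_reverses hG huw' hgu
  by_cases hcd : c = d
  · have hfg : f * g = 1 := Subgroup.disjoint_def.1 hφ (mul_mem hfΓ hgΓ) fun v => by
      rw [RelIso.mul_apply, hfφ, hgφ, hgε, hcd]
      ring
    exact mul_right_cancel (hfg.trans hgg.symm)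
  · have hdc : d = -c := by
      have hmul : (c - d) * (c + d) = 0 := by linear_combination hF c hc0 - hF d hd0
      exact (neg_eq_of_add_eq_zero_right
        ((mul_eq_zero.1 hmul).resolve_left (sub_ne_zero.2 hcd))).symm
    have h3 : (3 : F) = 0 := by
      have h2 : (2 : F) ≠ 0 := fun h2 => hcd (by linear_combination hdc * (-1) + c * h2)
      linear_combination hF 2 h2
    have hfgf : f * g * f = 1 :=
      Subgroup.disjoint_def.1 hφ (mul_mem (mul_mem hfΓ hgΓ) hfΓ) fun v => by
        rw [RelIso.mul_apply, RelIso.mul_apply, hfφ, hgφ, hfφ, hgε, hfε, hdc]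
        linear_combination ε v * c * h3
    have hone : g = 1 := by
      rw [← mul_left_inj f, ← mul_right_inj f, ← mul_assoc, hfgf, one_mul, hff]
    exact absurd (hgu ▸ congr($hone.symm u)) (G.ne_of_adj huw')

theorem exists_adj_not_reversed (hF : ∀ x : F, x ≠ 0 → x * x = 1)
    (hε : IsSignAlternating G ε) (hG : G.Connected)
    (hφ : Disjoint Γ (vertexStabilizer G φ)) {u : V} (hu : (G.neighborSet u).Nontrivial) :
    ∃ w, G.Adj u w ∧ ∀ f ∈ Γ, f ∈ edgeStabilizer G (sumLabel φ) → f u = w → f w ≠ u := by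
  by_contra! hrev
  obtain ⟨w, huw, w', huw', hne⟩ := hu
  obtain ⟨f, hfΓ, hf, hfu, hfw⟩ := hrev w huw
  obtain ⟨g, hgΓ, hg, hgu, hgw⟩ := hrev w' huw'
  refine hne ?_
  rw [← hfu, ← hgu, hε.eq_of_reverses hF hG hφ hfΓ hgΓ hf hg huw huw' hfu hfw hgu hgw]

end IsSignAlternating

end SumLabel

section Robust

variable {V : Type*} {G : SimpleGraph V}

theorem deleteEdges_map_preconnected (f : G ≃g G) {e : Sym2 V}
    (he : (G.deleteEdges {e}).Preconnected) : (G.deleteEdges {e.map f}).Preconnected := by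
  have hadj {u v : V} :
      (G.deleteEdges {e.map f}).Adj (f u) (f v) ↔ (G.deleteEdges {e}).Adj u v := by
    rw [deleteEdges_adj, deleteEdges_adj, f.map_adj_iff, ← Sym2.map_mk, Set.mem_singleton_iff,
      Set.mem_singleton_iff, (Sym2.map.injective f.injective).eq_iff]
  exact (Iso.preconnected_iff ⟨f.toEquiv, hadj⟩).1 he

theorem mk_ne_mk_of_notMem {X : Set V} {u : V} (hu : u ∉ X) (w : V) :
    ∀ x ∈ X, ∀ y ∈ X, s(x, y) ≠ s(u, w) := by
  intro x hx y hy h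
  rcases Sym2.eq_iff.1 h with ⟨rfl, -⟩ | ⟨-, rfl⟩
  exacts [hu hx, hu hy]

/-- `X` stays connected after the deletion of any edge whose deletion leaves `G` connected. A
function on the vertices that jumps only along such an edge and its image under an automorphism is
therefore constant on `X` as soon as one of the two edges does not lie inside `X`. -/
def IsRobust (G : SimpleGraph V) (X : Set V) : Prop :=
  ∀ e, (G.deleteEdges {e}).Preconnected → ((G.deleteEdges {e}).induce X).Preconnected

theorem isRobust_iff {X : Set V} :
    IsRobust G X ↔ ∀ e, (G.deleteEdges {e}).Preconnected → ∀ P : V → Prop,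
      (∀ u ∈ X, ∀ v ∈ X, G.Adj u v → s(u, v) ≠ e → P u → P v) → ∀ u ∈ X, ∀ v ∈ X, P u → P v := by
  simp only [IsRobust, induce_preconnected_iff, deleteEdges_adj, Set.mem_singleton_iff, and_imp,
    ne_eq]

theorem isRobust_singleton (z : V) : IsRobust G {z} :=
  isRobust_iff.2 fun _ _ _ _ _ hu _ hv h => (hu.trans hv.symm) ▸ h

namespace IsRobust

variable {X Y : Set V}

theorem eq_of_adj {α : Type*} (hX : IsRobust G X) {e : Sym2 V}
    (he : (G.deleteEdges {e}).Preconnected) {x : V → α}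
    (hx : ∀ u ∈ X, ∀ v ∈ X, G.Adj u v → s(u, v) ≠ e → x u = x v) {u v : V} (hu : u ∈ X)
    (hv : v ∈ X) : x u = x v :=
  isRobust_iff.1 hX e he (fun w => x u = x w)
    (fun a ha b hb hab hne h => h.trans (hx a ha b hb hab hne)) u hu v hv rfl

theorem union (hX : IsRobust G X) (hY : IsRobust G Y) (hXY : (X ∩ Y).Nonempty) :
    IsRobust G (X ∪ Y) := by
  refine isRobust_iff.2 fun e he P hP => ?_
  obtain ⟨z, hzX, hzY⟩ := hXY
  have hPX := isRobust_iff.1 hX e he P fun u hu v hv => hP u (Or.inl hu) v (Or.inl hv)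
  have hPY := isRobust_iff.1 hY e he P fun u hu v hv => hP u (Or.inr hu) v (Or.inr hv)
  rintro u (hu | hu) v (hv | hv) h
  · exact hPX u hu v hv h
  · exact hPY z hzY v hv (hPX u hu z hzX h)
  · exact hPX z hzX v hv (hPY u hu z hzY h)
  · exact hPY u hu v hv h

theorem image (hX : IsRobust G X) (f : G ≃g G) : IsRobust G (f '' X) := by
  refine isRobust_iff.2 fun e he P hP => ?_
  rintro _ ⟨u, hu, rfl⟩ _ ⟨v, hv, rfl⟩
  refine isRobust_iff.1 hX (e.map (f⁻¹ : G ≃g G)) (deleteEdges_map_preconnected f⁻¹ he) (P ∘ f)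
    ?_ u hu v hv
  refine fun a ha b hb hab hne => hP _ ⟨a, ha, rfl⟩ _ ⟨b, hb, rfl⟩ (f.map_adj_iff.2 hab) ?_
  rintro rfl
  exact hne (by simp)

theorem insert (hX : IsRobust G X) {u : V}
    (hu : ∀ e, (G.deleteEdges {e}).Preconnected → ∃ a ∈ X, G.Adj u a ∧ s(u, a) ≠ e) :
    IsRobust G (insert u X) := by
  refine isRobust_iff.2 fun e he P hP => ?_
  obtain ⟨a, ha, hua, hne⟩ := hu e he
  have hPX := isRobust_iff.1 hX e he P fun v hv w hw => hP v (Or.inr hv) w (Or.inr hw)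
  have hPu : P u → P a := hP u (Or.inl rfl) a (Or.inr ha) hua hne
  have hPa : P a → P u := hP a (Or.inr ha) u (Or.inl rfl) hua.symm (by rwa [Sym2.eq_swap])
  rintro v (rfl | hv) w (rfl | hw) h
  · exact h
  · exact hPX a ha w hw (hPu h)
  · exact hPa (hPX v hv a ha h)
  · exact hPX v hv w hw h

theorem insert_of_nontrivial (hX : IsRobust G X) {u : V}
    (hu : (X ∩ G.neighborSet u).Nontrivial) : IsRobust G (Insert.insert u X) := by
  obtain ⟨a, ⟨ha, hua⟩, b, ⟨hb, hub⟩, hab⟩ := hu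
  refine hX.insert fun e _ => ?_
  by_cases he : s(u, a) = e
  · exact ⟨b, hb, hub, fun h => hab (Sym2.congr_right.1 (he.trans h.symm))⟩
  · exact ⟨a, ha, hua, he⟩

theorem exists_adj_ne (hX : IsRobust G X) {u p : V} (hp : (G.deleteEdges {s(u, p)}).Preconnected)
    (hu : u ∈ X) (hX1 : X.Nontrivial) : ∃ q ∈ X, G.Adj u q ∧ q ≠ p := by
  by_contra! h
  obtain ⟨y, hy, hne⟩ := hX1.exists_ne u
  refine hne (isRobust_iff.1 hX _ hp (· = u) ?_ u hu y hy rfl)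
  intro v _ w hw hvw hedge hv
  rw [hv] at hvw hedge
  exact absurd congr(s(u, $(h w hw hvw))) hedge

end IsRobust

end Robust

section MarkedLabel

variable {V F : Type*} [Field F] {G : SimpleGraph V} {Γ : Subgroup (G ≃g G)} {φ ε : V → F}
  {e : Sym2 V} {f : G ≃g G}

open Classical in
/-- The sum labelling, with the label of the single edge `e` increased by one. -/
noncomputable def markedLabel (φ : V → F) (e : Sym2 V) : Sym2 V → F :=
  sumLabel φ + Pi.single e 1

theorem markedLabel_self : markedLabel φ e e = sumLabel φ e + 1 := by
  simp [markedLabel]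

theorem markedLabel_of_ne {e' : Sym2 V} (h : e' ≠ e) : markedLabel φ e e' = sumLabel φ e' := by
  simp [markedLabel, h]

theorem sumLabel_eq_iff_of_markedLabel {e₁ e₂ : Sym2 V}
    (h : markedLabel φ e e₁ = markedLabel φ e e₂) :
    sumLabel φ e₁ = sumLabel φ e₂ ↔ (e₁ = e ↔ e₂ = e) := by
  by_cases h₁ : e₁ = e <;> by_cases h₂ : e₂ = e
  · simp [h₁, h₂]
  · rw [h₁, markedLabel_self, markedLabel_of_ne h₂] at h
    simp [h₁, h₂, ← h]
  · rw [h₂, markedLabel_self, markedLabel_of_ne h₁] at h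
    simp [h₁, h₂, h]
  · simpa [markedLabel_of_ne, h₁, h₂] using h

theorem mem_edgeStabilizer_sumLabel_of_map_eq (hf : f ∈ edgeStabilizer G (markedLabel φ e))
    (he : e.map f = e) : f ∈ edgeStabilizer G (sumLabel φ) := by
  refine fun u v huv => (sumLabel_eq_iff_of_markedLabel (hf u v huv)).2 ?_
  have := (Sym2.map.injective f.injective).eq_iff (a := s(u, v)) (b := e)
  rwa [he, Sym2.map_mk] at this

namespace IsSignAlternating

theorem displacement_eq_iff_of_markedLabel (hε : IsSignAlternating G ε)
    (hf : f ∈ edgeStabilizer G (markedLabel φ e)) {u v : V} (huv : G.Adj u v) :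
    displacement φ ε f u = displacement φ ε f v ↔ (s(f u, f v) = e ↔ s(u, v) = e) :=
  (hε.displacement_eq_iff f huv).trans (sumLabel_eq_iff_of_markedLabel (hf u v huv))

theorem displacement_eq_of_isRobust (hε : IsSignAlternating G ε)
    (hf : f ∈ edgeStabilizer G (markedLabel φ e)) (he : (G.deleteEdges {e}).Preconnected)
    {X : Set V} (hX : IsRobust G X) (heX : ∀ u ∈ X, ∀ v ∈ X, s(u, v) ≠ e) {u v : V} (hu : u ∈ X)
    (hv : v ∈ X) : displacement φ ε f u = displacement φ ε f v := by
  refine hX.eq_of_adj (deleteEdges_map_preconnected f⁻¹ he) (fun a ha b hb hab hne => ?_) hu hv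
  refine (hε.displacement_eq_iff_of_markedLabel hf hab).2 (iff_of_false ?_ (heX a ha b hb))
  rintro rfl
  simp at hne

theorem mk_ne_of_mem_image (hε : IsSignAlternating G ε)
    (hf : f ∈ edgeStabilizer G (markedLabel φ e)) (he : (G.deleteEdges {e}).Preconnected)
    {X : Set V} (hX : IsRobust G X) (heX : ∀ u ∈ X, ∀ v ∈ X, s(u, v) ≠ e) (heG : e ∈ G.edgeSet) :
    ∀ u ∈ f '' X, ∀ v ∈ f '' X, s(u, v) ≠ e := by
  rintro _ ⟨u, hu, rfl⟩ _ ⟨v, hv, rfl⟩ rfl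
  have huv : G.Adj u v := f.map_adj_iff.1 heG
  have hd := hε.displacement_eq_of_isRobust hf he hX heX hu hv
  exact heX u hu v hv (((hε.displacement_eq_iff_of_markedLabel hf huv).1 hd).1 rfl)

end IsSignAlternating

end MarkedLabel

section RobustCompl

variable {V F : Type*} [Field F] {G : SimpleGraph V} {Γ : Subgroup (G ≃g G)} {φ ε : V → F}
  {u w : V} {f : G ≃g G}

theorem deleteEdges_preconnected_of_isRobust_compl (hu : (G.neighborSet u).Nontrivial)
    (hX : IsRobust G {u}ᶜ) (hG : G.Connected) (w : V) : (G.deleteEdges {s(u, w)}).Preconnected := by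
  obtain ⟨w', huw', hne⟩ := hu.exists_ne w
  have hadj : (G.deleteEdges {s(u, w)}).Adj w' u := by
    rw [deleteEdges_adj, Set.mem_singleton_iff, Sym2.eq_swap, Sym2.congr_right]
    exact ⟨huw'.symm, hne⟩
  have hreach (v : V) : (G.deleteEdges {s(u, w)}).Reachable w' v := by
    by_cases hv : v = u
    · exact hv ▸ hadj.reachable
    refine isRobust_iff.1 hX s(u, u) (by simpa using hG.preconnected)
      ((G.deleteEdges {s(u, w)}).Reachable w') (fun x hx y hy hxy _ h => ?_) w'
      (G.ne_of_adj huw').symm v hv .rfl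
    refine h.trans (Adj.reachable ?_)
    exact deleteEdges_adj.2 ⟨hxy, mk_ne_mk_of_notMem (by simp) w x hx y hy⟩
  exact fun x y => (hreach x).symm.trans (hreach y)

theorem apply_eq_self_of_isRobust_compl (hε : IsSignAlternating G ε) (hX : IsRobust G {u}ᶜ)
    (huw : G.Adj u w) (he : (G.deleteEdges {s(u, w)}).Preconnected)
    (hf : f ∈ edgeStabilizer G (markedLabel φ s(u, w))) (hrev : f u = w → f w ≠ u) : f u = u := by
  by_contra hfu
  have heX := mk_ne_mk_of_notMem (X := {u}ᶜ) (u := u) (by simp) w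
  have heY := hε.mk_ne_of_mem_image hf he hX heX huw
  have himage {x : V} (hx : x ≠ f u) : x ∈ f '' {u}ᶜ :=
    ⟨f⁻¹ x, fun h => hx (by rw [← h, RelIso.apply_inv_self]), RelIso.apply_inv_self f x⟩
  have hfuw : f u = w := by
    by_contra hne
    exact heY u (himage (Ne.symm hfu)) w (himage (Ne.symm hne)) rfl
  have hfw : f w ≠ u := hrev hfuw
  have hwu : w ≠ u := (G.ne_of_adj huw).symm
  obtain ⟨u', hu'⟩ := f.surjective u
  have hu'u : u' ≠ u := fun h => hfu (by rwa [h] at hu')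
  have hu'w : u' ≠ w := fun h => hfw (by rwa [h] at hu')
  have huu' : displacement φ ε f u = displacement φ ε f u' :=
    hε.displacement_eq_of_isRobust hf he (hX.image f) heY (himage (Ne.symm hfu))
      (himage (by rwa [hfuw]))
  have hu'w : displacement φ ε f u' = displacement φ ε f w :=
    hε.displacement_eq_of_isRobust hf he hX heX hu'u hwu
  have hedge := ((hε.displacement_eq_iff_of_markedLabel hf huw).1 (huu'.trans hu'w)).2 rfl
  rw [hfuw, Sym2.eq_swap, Sym2.congr_left] at hedge
  exact hfw hedge

/-- The sum of `ε v * displacement φ ε f v` is `∑ v, (φ (f v) - φ v) = 0`, and so is that of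
`ε v * c`. -/
theorem IsSignAlternating.displacement_eq_of_forall_ne [Fintype V] (hε : IsSignAlternating G ε)
    (f : V ≃ V) (hsum : ∑ v, ε v = 0) {c : F} (hc : ∀ v ≠ u, displacement φ ε f v = c) :
    displacement φ ε f u = c := by
  have hdisp : ∑ v, ε v * displacement φ ε f v = 0 := by
    simp only [displacement, ← mul_assoc, hε.mul_self, one_mul, Finset.sum_sub_distrib,
      Equiv.sum_comp f φ, sub_self]
  have hsingle : ∑ v, ε v * (displacement φ ε f v - c) = ε u * (displacement φ ε f u - c) :=
    Finset.sum_eq_single u (fun v _ hv => by rw [hc v hv, sub_self, mul_zero]) (by simp)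
  simp only [mul_sub, Finset.sum_sub_distrib, hdisp, ← Finset.sum_mul, hsum] at hsingle
  have hmul : ε u * (displacement φ ε f u - c) = 0 := by linear_combination -hsingle
  exact sub_eq_zero.1 ((mul_eq_zero.1 hmul).resolve_left (hε.ne_zero u))

theorem exists_disjoint_edgeStabilizer_of_isRobust_compl [Fintype V]
    (hF : ∀ x : F, x ≠ 0 → x * x = 1) (hε : IsSignAlternating G ε) (hsum : ∑ v, ε v = 0)
    (hG : G.Connected) (hφ : Disjoint Γ (vertexStabilizer G φ))
    (hu : (G.neighborSet u).Nontrivial) (hX : IsRobust G {u}ᶜ) :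
    ∃ ψ : Sym2 V → F, Disjoint Γ (edgeStabilizer G ψ) := by
  obtain ⟨w, huw, hrev⟩ := hε.exists_adj_not_reversed hF hG hφ hu
  have he := deleteEdges_preconnected_of_isRobust_compl hu hX hG w
  refine ⟨markedLabel φ s(u, w), Subgroup.disjoint_def.2 fun {f} hfΓ hf => ?_⟩
  have hfu : f u = u := by
    refine apply_eq_self_of_isRobust_compl hε hX huw he hf fun hfu hfw => ?_
    refine hrev f hfΓ (mem_edgeStabilizer_sumLabel_of_map_eq hf ?_) hfu hfw
    rw [Sym2.map_mk, hfu, hfw, Sym2.eq_swap]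
  have hfw : f w = w := by
    by_contra hfw
    have hjump : displacement φ ε f u ≠ displacement φ ε f w := fun h => by
      have hedge := ((hε.displacement_eq_iff_of_markedLabel hf huw).1 h).2 rfl
      rw [hfu, Sym2.congr_right] at hedge
      exact hfw hedge
    have hc (v : V) (hv : v ≠ u) : displacement φ ε f v = displacement φ ε f w :=
      hε.displacement_eq_of_isRobust hf he hX (mk_ne_mk_of_notMem (by simp) w) hv
        (G.ne_of_adj huw).symm
    exact hjump (hε.displacement_eq_of_forall_ne f.toEquiv hsum hc)
  exact hε.eq_one_of_apply_eq_self hG hφ hfΓ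
    (mem_edgeStabilizer_sumLabel_of_map_eq hf (by rw [Sym2.map_mk, hfu, hfw])) hfu

end RobustCompl

section Ear

variable {V : Type*} {G : SimpleGraph V} {X : Set V} {n : ℕ} {t : ℕ → V}

/-- The vertices `t 1, …, t n` outside `X` form an induced path with `2 ≤ n`, attached to `X` by the
edges from `t 1` to `t 0` and from `t n` to `t (n + 1)` only. The ends `t 0` and `t (n + 1)` may
coincide. -/
structure IsEar (G : SimpleGraph V) (X : Set V) (n : ℕ) (t : ℕ → V) : Prop where
  two_le : 2 ≤ n
  first_mem : t 0 ∈ X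
  last_mem : t (n + 1) ∈ X
  notMem : ∀ i ∈ Set.Icc 1 n, t i ∉ X
  injOn : Set.InjOn t (Set.Icc 1 n)
  adj : ∀ i ≤ n, G.Adj (t i) (t (i + 1))
  eq_of_adj : ∀ i ∈ Set.Icc 1 n, ∀ j ∈ Set.Icc 1 n, G.Adj (t i) (t j) → j = i + 1 ∨ i = j + 1
  eq_of_adj_mem : ∀ i ∈ Set.Icc 1 n, ∀ p ∈ X, G.Adj (t i) p →
    i = 1 ∧ p = t 0 ∨ i = n ∧ p = t (n + 1)

namespace IsEar

theorem eq_of_mk_eq (ht : IsEar G X n t) {i j : ℕ} (hi : i ≤ n) (hj : j ≤ n)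
    (h : s(t i, t (i + 1)) = s(t j, t (j + 1))) : i = j := by
  have hmem {k : ℕ} (hk : k ≤ n + 1) : t k ∈ X ↔ k = 0 ∨ k = n + 1 := by
    refine ⟨fun hkX => ?_, ?_⟩
    · by_contra! hne
      exact ht.notMem k ⟨by omega, by omega⟩ hkX
    · rintro (rfl | rfl)
      exacts [ht.first_mem, ht.last_mem]
  have hinj {k l : ℕ} (hk : k ≤ n + 1) (hl : l ≤ n + 1) (hkl : t k = t l) :
      k = l ∨ (k = 0 ∨ k = n + 1) ∧ (l = 0 ∨ l = n + 1) := by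
    by_cases hkX : t k ∈ X
    · exact Or.inr ⟨(hmem hk).1 hkX, (hmem hl).1 (hkl ▸ hkX)⟩
    · have hlX : t l ∉ X := hkl ▸ hkX
      rw [hmem hk] at hkX
      rw [hmem hl] at hlX
      exact Or.inl (ht.injOn ⟨by omega, by omega⟩ ⟨by omega, by omega⟩ hkl)
  have := ht.two_le
  rcases Sym2.eq_iff.1 h with ⟨h₁, h₂⟩ | ⟨h₁, h₂⟩
  · have := hinj (by omega) (by omega) h₁
    have := hinj (by omega) (by omega) h₂
    omega
  · have := hinj (by omega) (by omega) h₁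
    have := hinj (by omega) (by omega) h₂
    omega

/-- A deleted edge of the ear lies on one side of `t i`, so `t i` can still be reached from the
other end. -/
theorem apply_iff (ht : IsEar G X n t) {e : Sym2 V} {P : V → Prop}
    (hP : ∀ i ≤ n, s(t i, t (i + 1)) ≠ e → (P (t i) ↔ P (t (i + 1))))
    (hends : P (t 0) ↔ P (t (n + 1))) {i : ℕ} (hi : i ≤ n + 1) : P (t 0) ↔ P (t i) := by
  by_cases he : ∃ j < i, s(t j, t (j + 1)) = e
  · obtain ⟨j, hji, rfl⟩ := he
    have hup (k : ℕ) (hik : i ≤ k) : k ≤ n + 1 → (P (t i) ↔ P (t k)) := by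
      induction k, hik using Nat.le_induction with
      | base => exact fun _ => Iff.rfl
      | succ k hik ih =>
        refine fun hk => (ih (by omega)).trans (hP k (by omega) fun h => ?_)
        have := ht.eq_of_mk_eq (by omega) (by omega) h
        omega
    exact hends.trans (hup (n + 1) hi le_rfl).symm
  · have hup (k : ℕ) (hki : k ≤ i) : P (t 0) ↔ P (t k) := by
      induction k with
      | zero => rfl
      | succ k ih =>
        exact (ih (by omega)).trans (hP k (by omega) fun h => he ⟨k, by omega, h⟩)
    exact hup i le_rfl

theorem induce_union_preconnected (ht : IsEar G X n t) {e : Sym2 V}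
    (hX : ((G.deleteEdges {e}).induce X).Preconnected) :
    ((G.deleteEdges {e}).induce (X ∪ t '' Set.Icc 1 n)).Preconnected := by
  rw [induce_preconnected_iff] at hX ⊢
  intro P hP
  have hPX := hX P fun u hu v hv => hP u (Or.inl hu) v (Or.inl hv)
  have hmem {i : ℕ} (hi : i ≤ n + 1) : t i ∈ X ∪ t '' Set.Icc 1 n := by
    rcases Nat.eq_zero_or_pos i with rfl | hpos
    · exact Or.inl ht.first_mem
    · rcases hi.eq_or_lt with rfl | hlt
      · exact Or.inl ht.last_mem
      · exact Or.inr ⟨i, ⟨hpos, by omega⟩, rfl⟩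
  have hear {i : ℕ} (hi : i ≤ n + 1) : P (t 0) ↔ P (t i) := by
    refine ht.apply_iff (e := e) (fun j hj hne => ?_) ⟨hPX _ ht.first_mem _ ht.last_mem,
      hPX _ ht.last_mem _ ht.first_mem⟩ hi
    have hadj : (G.deleteEdges {e}).Adj (t j) (t (j + 1)) := deleteEdges_adj.2 ⟨ht.adj j hj, hne⟩
    have hj' := hmem (i := j) (by omega)
    have hj1 := hmem (i := j + 1) (by omega)
    exact ⟨hP _ hj' _ hj1 hadj, hP _ hj1 _ hj' hadj.symm⟩
  have hbase {v : V} (hv : v ∈ X ∪ t '' Set.Icc 1 n) : P (t 0) ↔ P v := by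
    rcases hv with hv | ⟨i, hi, rfl⟩
    · exact ⟨hPX _ ht.first_mem v hv, hPX v hv _ ht.first_mem⟩
    · exact hear (by have := hi.2; omega)
  exact fun u hu v hv h => (hbase hv).1 ((hbase hu).2 h)

theorem isRobust_union (ht : IsEar G X n t) (hX : IsRobust G X) :
    IsRobust G (X ∪ t '' Set.Icc 1 n) :=
  fun e he => ht.induce_union_preconnected (hX e he)

theorem deleteEdges_preconnected (ht : IsEar G X n t) (hG : G.Connected) (hX : IsRobust G X)
    (hV : X ∪ t '' Set.Icc 1 n = Set.univ) {u v : V} (hu : u ∉ X) :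
    (G.deleteEdges {s(u, v)}).Preconnected := by
  have hXG := isRobust_iff.1 hX s(u, u) (by simpa using hG.preconnected)
  have hXe : ((G.deleteEdges {s(u, v)}).induce X).Preconnected := by
    rw [induce_preconnected_iff]
    exact fun P hP => hXG P fun x hx y hy hxy _ =>
      hP x hx y hy (deleteEdges_adj.2 ⟨hxy, mk_ne_mk_of_notMem hu v x hx y hy⟩)
  have := ht.induce_union_preconnected hXe
  rw [hV] at this
  exact (induceUnivIso _).preconnected_iff.1 this

theorem eq_of_boundary (ht : IsEar G X n t) (hV : X ∪ t '' Set.Icc 1 n = Set.univ) {q p : V}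
    (hq : q ∉ X) (hp : p ∈ X) (h : G.Adj q p) : q = t 1 ∧ p = t 0 ∨ q = t n ∧ p = t (n + 1) := by
  obtain ⟨i, hi, rfl⟩ := (hV ▸ Set.mem_univ q : q ∈ X ∪ t '' Set.Icc 1 n).resolve_left hq
  exact (ht.eq_of_adj_mem i hi p hp h).imp (fun ⟨hi, hp⟩ => ⟨hi ▸ rfl, hp⟩)
    fun ⟨hi, hp⟩ => ⟨hi ▸ rfl, hp⟩

theorem neighborSet_eq (ht : IsEar G X n t) (hV : X ∪ t '' Set.Icc 1 n = Set.univ) {i : ℕ}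
    (hi : i < n) : G.neighborSet (t (i + 1)) = {t i, t (i + 2)} := by
  refine Set.Subset.antisymm (fun v hv => ?_) ?_
  · rcases (hV ▸ Set.mem_univ v : v ∈ X ∪ t '' Set.Icc 1 n) with hvX | ⟨j, hj, rfl⟩
    · rcases ht.eq_of_adj_mem (i + 1) ⟨by omega, hi⟩ v hvX hv with ⟨hi1, rfl⟩ | ⟨hin, rfl⟩
      · exact Or.inl (by rw [Nat.succ_injective hi1])
      · exact Or.inr (by rw [← hin]; rfl)
    · rcases ht.eq_of_adj (i + 1) ⟨by omega, hi⟩ j hj hv with rfl | h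
      · exact Or.inr rfl
      · exact Or.inl (by rw [Nat.succ_injective h])
  · rintro _ (rfl | rfl)
    exacts [(ht.adj i hi.le).symm, ht.adj (i + 1) hi]

theorem mem_of_two_lt_encard (ht : IsEar G X n t) (hV : X ∪ t '' Set.Icc 1 n = Set.univ) {v : V}
    (hv : 2 < (G.neighborSet v).encard) : v ∈ X := by
  by_contra hvX
  obtain ⟨i, hi, rfl⟩ := (hV ▸ Set.mem_univ v : v ∈ X ∪ t '' Set.Icc 1 n).resolve_left hvX
  obtain ⟨j, rfl⟩ := Nat.exists_eq_add_of_le' hi.1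
  rw [ht.neighborSet_eq hV hi.2] at hv
  exact hv.not_ge ((Set.encard_insert_le _ _).trans_eq (by rw [Set.encard_singleton]; rfl))

end IsEar

theorem isEar_of_distance (hsub : ∀ v ∉ X, (X ∩ G.neighborSet v).Subsingleton) (D : V → ℕ)
    (hD0 : ∀ v, D v = 0 ↔ v ∈ X)
    (hD : ∀ u v, G.Adj u v → s(u, v) ≠ s(t n, t (n + 1)) → D u ≤ D v + 1) (hn : 2 ≤ n)
    (hDt : ∀ i ≤ n, D (t i) = i) (hlast : t (n + 1) ∈ X)
    (hadj : ∀ i ≤ n, G.Adj (t i) (t (i + 1))) : IsEar G X n t := by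
  have hfirst : t 0 ∈ X := (hD0 _).1 (hDt 0 (Nat.zero_le n))
  have hnotMem {i : ℕ} (hi : i ∈ Set.Icc 1 n) : t i ∉ X := by
    rw [← hD0, hDt i hi.2]
    have := hi.1
    omega
  have hinj {i j : ℕ} (hi : i ≤ n) (hj : j ≤ n) (hij : t i = t j) : i = j := by
    rw [← hDt i hi, ← hDt j hj, hij]
  refine ⟨hn, hfirst, hlast, fun _ => hnotMem, fun i hi j hj => hinj hi.2 hj.2, hadj,
    fun i hi j hj hij => ?_, fun i hi p hp hip => ?_⟩
  · have hne : s(t i, t j) ≠ s(t n, t (n + 1)) := fun h => by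
      rcases Sym2.eq_iff.1 h with ⟨-, h⟩ | ⟨h, -⟩
      exacts [hnotMem hj (h ▸ hlast), hnotMem hi (h ▸ hlast)]
    have hle := hD _ _ hij hne
    have hge := hD _ _ hij.symm (by rwa [Sym2.eq_swap])
    have hij' : i ≠ j := fun h => G.ne_of_adj hij (h ▸ rfl)
    rw [hDt i hi.2, hDt j hj.2] at hle hge
    omega
  · by_cases he : s(t i, p) = s(t n, t (n + 1))
    · rcases Sym2.eq_iff.1 he with ⟨h, rfl⟩ | ⟨h, -⟩
      exacts [Or.inr ⟨hinj hi.2 le_rfl h, rfl⟩, absurd (h ▸ hlast) (hnotMem hi)]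
    · have hle := hD _ _ hip he
      rw [hDt i hi.2, (hD0 p).2 hp] at hle
      obtain rfl : i = 1 := le_antisymm hle hi.1
      exact Or.inl ⟨rfl, hsub _ (hnotMem hi) ⟨hp, hip⟩ ⟨hfirst, (hadj 0 (Nat.zero_le n)).symm⟩⟩

/-- A geodesic from `u` back to `X` in `G` with the edge `s(u, a)` deleted closes up to an ear. -/
theorem exists_isEar (hG : G.Connected) {u a : V} (ha : a ∈ X) (hu : u ∉ X) (hua : G.Adj u a)
    (he : (G.deleteEdges {s(u, a)}).Preconnected)
    (hsub : ∀ v ∉ X, (X ∩ G.neighborSet v).Subsingleton) : ∃ n t, IsEar G X n t := by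
  have hX : X.Nonempty := ⟨a, ha⟩
  have hH : (G.deleteEdges {s(u, a)}).Connected := { preconnected := he, nonempty := hG.nonempty }
  let D := distTo (G.deleteEdges {s(u, a)}) X
  obtain ⟨t, htu, hDt, hstep⟩ : ∃ t : ℕ → V, t (D u) = u ∧ (∀ i ≤ D u, D (t i) = i) ∧
      ∀ i < D u, (G.deleteEdges {s(u, a)}).Adj (t (i + 1)) (t i) := exists_geodesic_to hH hX u
  have hD0 (v : V) : D v = 0 ↔ v ∈ X := distTo_eq_zero_iff hH hX
  have hD (v w : V) (hvw : G.Adj v w) (hne : s(v, w) ≠ s(u, a)) : D v ≤ D w + 1 :=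
    distTo_le_succ_of_adj hH hX (deleteEdges_adj.2 ⟨hvw, hne⟩)
  have hn0 : D u ≠ 0 := mt (hD0 u).1 hu
  have hn1 : D u ≠ 1 := fun hn => by
    obtain ⟨hut, hne⟩ := deleteEdges_adj.1 (hstep 0 (by omega))
    have ht1 : t 1 = u := hn ▸ htu
    rw [Nat.zero_add, ht1] at hut hne
    have ht0 : t 0 ∈ X := (hD0 _).1 (hDt 0 (Nat.zero_le _))
    exact hne (congrArg (fun v => s(u, v)) (hsub u hu ⟨ht0, hut⟩ ⟨ha, hua⟩))
  let t' : ℕ → V := Function.update t (D u + 1) a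
  have ht' {i : ℕ} (hi : i ≤ D u) : t' i = t i := Function.update_of_ne (by omega) _ _
  have hlast : t' (D u + 1) = a := Function.update_self ..
  refine ⟨D u, t', isEar_of_distance hsub D hD0 ?_ (by omega)
    (fun i hi => by rw [ht' hi, hDt i hi]) (hlast ▸ ha) fun i hi => ?_⟩
  · rwa [ht' le_rfl, htu, hlast]
  · rcases hi.eq_or_lt with rfl | hlt
    · rwa [ht' le_rfl, htu, hlast]
    · rw [ht' hi, ht' (i := i + 1) hlt]
      exact (deleteEdges_adj.1 (hstep i hlt)).1.symm

end Ear

section MaximalRobust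

variable {V F : Type*} [Field F] {G : SimpleGraph V} {Γ : Subgroup (G ≃g G)} {φ ε : V → F}
  {X : Set V}

theorem eq_univ_of_maximal (hX : Maximal (fun Y => IsRobust G Y ∧ Y ≠ Set.univ) X) {Y : Set V}
    (hY : IsRobust G Y) (hXY : X ⊂ Y) : Y = Set.univ := by
  by_contra hne
  exact hXY.ne (hX.eq_of_subset ⟨hY, hne⟩ hXY.subset)

theorem deleteEdges_preconnected_of_maximal
    (hX : Maximal (fun Y => IsRobust G Y ∧ Y ≠ Set.univ) X) {u a : V} (hu : u ∉ X) (ha : a ∈ X)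
    (hua : G.Adj u a) (hN : (G.neighborSet u).Nontrivial)
    (hsub : (X ∩ G.neighborSet u).Subsingleton) : (G.deleteEdges {s(u, a)}).Preconnected := by
  by_contra hbridge
  have hins : insert u X = Set.univ := by
    refine eq_univ_of_maximal hX (hX.prop.1.insert fun e he => ⟨a, ha, hua, ?_⟩)
      (Set.ssubset_insert hu)
    rintro rfl
    exact hbridge he
  have hNX : G.neighborSet u ⊆ X := fun v hv =>
    (hins ▸ Set.mem_univ v : v ∈ insert u X).resolve_left (G.ne_of_adj hv).symm
  rw [Set.inter_eq_right.2 hNX] at hsub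
  exact Set.not_subsingleton_iff.2 hN hsub

namespace IsEar

variable {n : ℕ} {t : ℕ → V} {p z : V} {f : G ≃g G}

theorem image_subset (ht : IsEar G X n t) (hV : X ∪ t '' Set.Icc 1 n = Set.univ)
    (hX : Maximal (fun Y => IsRobust G Y ∧ Y ≠ Set.univ) X) (hG : G.Connected)
    (hε : IsSignAlternating G ε) (hz : 2 < (G.neighborSet z).encard) (hp : p = t 0 ∨ p = t 2)
    (hf : f ∈ edgeStabilizer G (markedLabel φ s(t 1, p))) : f '' X ⊆ X := by
  have h1 : t 1 ∉ X := ht.notMem 1 ⟨le_rfl, one_le_two.trans ht.two_le⟩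
  have hN : G.neighborSet (t 1) = {t 0, t 2} :=
    ht.neighborSet_eq hV (zero_lt_two.trans_le ht.two_le)
  have h1p : G.Adj (t 1) p := by rwa [← mem_neighborSet, hN]
  have hbr (q : V) : (G.deleteEdges {s(t 1, q)}).Preconnected :=
    ht.deleteEdges_preconnected hG hX.prop.1 hV h1
  have hmark := hε.mk_ne_of_mem_image hf (hbr p) hX.prop.1 (mk_ne_mk_of_notMem h1 p) h1p
  have hzX : z ∈ X := ht.mem_of_two_lt_encard hV hz
  have hfzX : f z ∈ X := by
    refine ht.mem_of_two_lt_encard hV ?_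
    rwa [← Iso.image_neighborSet, f.injective.encard_image]
  have hfz : f z ∈ f '' X := ⟨z, hzX, rfl⟩
  by_contra hsub
  have huniv : X ∪ f '' X = Set.univ :=
    eq_univ_of_maximal hX (hX.prop.1.union (hX.prop.1.image f) ⟨f z, hfzX, hfz⟩)
      (Set.ssubset_union_left_iff.2 hsub)
  have h1f : t 1 ∈ f '' X :=
    (huniv ▸ Set.mem_univ (t 1) : t 1 ∈ X ∪ f '' X).resolve_left h1
  have hother (q : V) : ∃ q' ∈ f '' X, G.Adj (t 1) q' ∧ q' ≠ q :=
    (hX.prop.1.image f).exists_adj_ne (hbr q) h1f ⟨t 1, h1f, f z, hfz, fun h => h1 (h ▸ hfzX)⟩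
  refine hmark (t 1) h1f p ?_ rfl
  obtain ⟨q, hq, hadj, hne⟩ := hother (t 2)
  obtain ⟨q', hq', hadj', hne'⟩ := hother (t 0)
  rw [← mem_neighborSet, hN] at hadj hadj'
  obtain rfl : q = t 0 := hadj.resolve_right hne
  obtain rfl : q' = t 2 := hadj'.resolve_left hne'
  rcases hp with rfl | rfl
  exacts [hq, hq']

theorem disjoint_edgeStabilizer (ht : IsEar G X n t) (hV : X ∪ t '' Set.Icc 1 n = Set.univ)
    (hX : Maximal (fun Y => IsRobust G Y ∧ Y ≠ Set.univ) X) (hG : G.Connected)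
    (hφ : Disjoint Γ (vertexStabilizer G φ)) (hε : IsSignAlternating G ε)
    (hz : 2 < (G.neighborSet z).encard) (hp : p = t 0 ∨ p = t 2)
    (hne : markedLabel φ s(t 1, p) s(t 1, t 0) ≠ markedLabel φ s(t 1, p) s(t n, t (n + 1))) :
    Disjoint Γ (edgeStabilizer G (markedLabel φ s(t 1, p))) := by
  refine Subgroup.disjoint_def.2 fun {f} hfΓ hf => ?_
  have h1 : t 1 ∉ X := ht.notMem 1 ⟨le_rfl, one_le_two.trans ht.two_le⟩
  have h2 : t 2 ∉ X := ht.notMem 2 ⟨one_le_two, ht.two_le⟩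
  have hN : G.neighborSet (t 1) = {t 0, t 2} :=
    ht.neighborSet_eq hV (zero_lt_two.trans_le ht.two_le)
  have hadj0 : G.Adj (t 1) (t 0) := (ht.adj 0 (Nat.zero_le n)).symm
  have hf1X : f (t 1) ∉ X := fun h => h1 <| by
    simpa using ht.image_subset hV hX hG hε hz hp (inv_mem hf) ⟨f (t 1), h, rfl⟩
  have hf0X : f (t 0) ∈ X := ht.image_subset hV hX hG hε hz hp hf ⟨t 0, ht.first_mem, rfl⟩
  obtain ⟨hf1, hf0⟩ : f (t 1) = t 1 ∧ f (t 0) = t 0 := by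
    refine (ht.eq_of_boundary hV hf1X hf0X (f.map_adj_iff.2 hadj0)).resolve_right ?_
    rintro ⟨hf1, hf0⟩
    have := hf _ _ hadj0
    rw [hf1, hf0] at this
    exact hne this.symm
  have hf2 : f (t 2) = t 2 := by
    have hmem : f (t 2) ∈ ({t 0, t 2} : Set V) := by
      rw [← hN, mem_neighborSet, ← hf1]
      exact f.map_adj_iff.2 (ht.adj 1 (one_le_two.trans ht.two_le))
    refine hmem.resolve_left fun h => h2 ?_
    rw [f.injective (h.trans hf0.symm)]
    exact ht.first_mem
  refine hε.eq_one_of_apply_eq_self hG hφ hfΓ (mem_edgeStabilizer_sumLabel_of_map_eq hf ?_) hf1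
  rcases hp with rfl | rfl
  exacts [by rw [Sym2.map_mk, hf1, hf0], by rw [Sym2.map_mk, hf1, hf2]]

/-- Mark the first edge of the ear if the sum labelling does not tell it from the last, and the
second edge otherwise. -/
theorem exists_disjoint_edgeStabilizer (ht : IsEar G X n t)
    (hX : Maximal (fun Y => IsRobust G Y ∧ Y ≠ Set.univ) X) (hG : G.Connected)
    (hφ : Disjoint Γ (vertexStabilizer G φ)) (hε : IsSignAlternating G ε)
    (hz : 2 < (G.neighborSet z).encard) : ∃ ψ : Sym2 V → F, Disjoint Γ (edgeStabilizer G ψ) := by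
  have hn := ht.two_le
  have h1 : t 1 ∉ X := ht.notMem 1 ⟨le_rfl, one_le_two.trans hn⟩
  have h2 : t 2 ∉ X := ht.notMem 2 ⟨one_le_two, hn⟩
  have hV : X ∪ t '' Set.Icc 1 n = Set.univ := by
    refine eq_univ_of_maximal hX (ht.isRobust_union hX.prop.1)
      (Set.ssubset_union_left_iff.2 fun h => h1 (h ⟨1, ⟨le_rfl, ?_⟩, rfl⟩))
    exact one_le_two.trans ht.two_le
  by_cases hsum : sumLabel φ s(t 1, t 0) = sumLabel φ s(t n, t (n + 1))
  · refine ⟨markedLabel φ s(t 1, t 0),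
      ht.disjoint_edgeStabilizer hV hX hG hφ hε hz (Or.inl rfl) fun h => ?_⟩
    have hedge := ((sumLabel_eq_iff_of_markedLabel h).1 hsum).1 rfl
    rw [Sym2.eq_swap (a := t 1)] at hedge
    have := ht.eq_of_mk_eq le_rfl (Nat.zero_le n) hedge
    omega
  · refine ⟨markedLabel φ s(t 1, t 2),
      ht.disjoint_edgeStabilizer hV hX hG hφ hε hz (Or.inr rfl) fun h => ?_⟩
    refine hsum ((sumLabel_eq_iff_of_markedLabel h).2 (iff_of_false ?_ ?_)) <;> intro hedge
    · exact h2 (Sym2.congr_right.1 hedge ▸ ht.first_mem)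
    · have := ht.eq_of_mk_eq le_rfl (by omega) hedge
      omega

end IsEar

theorem exists_disjoint_edgeStabilizer_of_two_lt_encard [Finite V]
    (hF : ∀ x : F, x ≠ 0 → x * x = 1) (hG : G.Connected)
    (hN : ∀ v, (G.neighborSet v).Nontrivial) {z : V} (hz : 2 < (G.neighborSet z).encard)
    (hφ : Disjoint Γ (vertexStabilizer G φ)) :
    ∃ ψ : Sym2 V → F, Disjoint Γ (edgeStabilizer G ψ) := by
  by_contra! hΓ
  have := Fintype.ofFinite V
  obtain ⟨ε, hε, hsum⟩ := exists_isSignAlternating hF hG hφ (hΓ _)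
  have hzV : ({z} : Set V) ≠ Set.univ := by
    obtain ⟨y, hy⟩ := (hN z).nonempty
    exact fun h => G.ne_of_adj hy (h ▸ Set.mem_univ y : y ∈ ({z} : Set V)).symm
  obtain ⟨X, hzX, hX⟩ := Finite.exists_le_maximal (p := fun Y => IsRobust G Y ∧ Y ≠ Set.univ)
    ⟨isRobust_singleton z, hzV⟩
  have hsub (u : V) (hu : u ∉ X) : (X ∩ G.neighborSet u).Subsingleton := by
    by_contra hnt
    have hins : insert u X = Set.univ :=
      eq_univ_of_maximal hX (hX.prop.1.insert_of_nontrivial (Set.not_subsingleton_iff.1 hnt))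
        (Set.ssubset_insert hu)
    obtain rfl : X = {u}ᶜ :=
      Set.Subset.antisymm (Set.subset_compl_singleton_iff.2 hu) (Set.compl_subset_iff_union.2 hins)
    obtain ⟨ψ, hψ⟩ :=
      exists_disjoint_edgeStabilizer_of_isRobust_compl hF hε hsum hG hφ (hN u) hX.prop.1
    exact hΓ ψ hψ
  obtain ⟨u, hu, a, ha, hua⟩ : ∃ u ∉ X, ∃ a ∈ X, G.Adj u a := by
    obtain ⟨y, hy⟩ := (Set.ne_univ_iff_exists_notMem X).1 hX.prop.2
    obtain ⟨w⟩ := hG z y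
    obtain ⟨d, -, ha, hu⟩ := w.exists_boundary_dart X (hzX rfl) hy
    exact ⟨d.snd, hu, d.fst, ha, d.adj.symm⟩
  obtain ⟨n, t, ht⟩ := exists_isEar hG ha hu hua
    (deleteEdges_preconnected_of_maximal hX hu ha hua (hN u) (hsub u hu)) hsub
  obtain ⟨ψ, hψ⟩ := ht.exists_disjoint_edgeStabilizer hX hG hφ hε hz
  exact hΓ ψ hψ

end MaximalRobust

section Main

variable {V F L : Type*} {G : SimpleGraph V}

theorem exists_disjoint_edgeStabilizer [Finite V] [Field F] (hF : ∀ x : F, x ≠ 0 → x * x = 1)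
    (hG : G.Connected) (hN : ∀ v, (G.neighborSet v).Nontrivial) {Γ : Subgroup (G ≃g G)}
    {φ : V → F} (hφ : Disjoint Γ (vertexStabilizer G φ)) :
    ∃ ψ : Sym2 V → F, Disjoint Γ (edgeStabilizer G ψ) := by
  by_cases hdeg : ∃ z, 2 < (G.neighborSet z).encard
  · obtain ⟨z, hz⟩ := hdeg
    exact exists_disjoint_edgeStabilizer_of_two_lt_encard hF hG hN hz hφ
  · push Not at hdeg
    exact exists_disjoint_edgeStabilizer_of_cycle hφ hG fun v =>
      le_antisymm (hdeg v) (Order.add_one_le_of_lt (Set.one_lt_encard_iff_nontrivial.2 (hN v)))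

theorem exists_edgeStabilizer_eq_bot_of_field [Finite V] [Field F]
    (hF : ∀ x : F, x ≠ 0 → x * x = 1) (hG : G.Connected) (hcyc : ¬ G.IsAcyclic) {φ : V → F}
    (hφ : vertexStabilizer G φ = ⊥) : ∃ ψ : Sym2 V → F, edgeStabilizer G ψ = ⊥ :=
  exists_edgeStabilizer_eq_bot_of_core hG hcyc hφ fun _ hΓ =>
    exists_disjoint_edgeStabilizer hF (induce_core_connected hG hcyc)
      nontrivial_neighborSet_induce_core hΓ

theorem exists_edgeStabilizer_eq_bot [Finite V] (hG : G.Connected) (hcyc : ¬ G.IsAcyclic) {d : ℕ}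
    {φ : V → Fin d} (hφ : vertexStabilizer G φ = ⊥) :
    ∃ ψ : Sym2 V → Fin d, edgeStabilizer G ψ = ⊥ := by
  obtain ⟨v⟩ := hG.nonempty
  match d with
  | 0 => exact (φ v).elim0
  | 1 =>
    refine ⟨fun _ => 0, eq_bot_iff.2 fun f _ => ?_⟩
    exact hφ ▸ fun _ => Subsingleton.elim _ _
  | 2 => exact exists_edgeStabilizer_eq_bot_of_field (F := ZMod 2) (by decide) hG hcyc hφ
  | 3 => exact exists_edgeStabilizer_eq_bot_of_field (F := ZMod 3) (by decide) hG hcyc hφ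
  | d + 4 =>
    exact exists_edgeStabilizer_eq_bot_of_four_labels hG hcyc (Fin.castLEEmb (by omega)) hφ

theorem vertexStabilizer_eq_bot_iff {φ : V → L} :
    vertexStabilizer G φ = ⊥ ↔ ∀ f : G ≃g G, (∀ x, φ (f x) = φ x) → ∀ x, f x = x := by
  rw [Subgroup.eq_bot_iff_forall]
  exact forall₂_congr fun f _ => RelIso.ext_iff

theorem distinguishingIndex_le_distinguishingNumber [Finite V] (hG : G.Connected)
    (hcyc : ¬ G.IsAcyclic) : distinguishingIndex G ≤ distinguishingNumber G := by
  have hne : {d : ℕ | ∃ φ : V → Fin d,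
      ∀ f : G ≃g G, (∀ x, φ (f x) = φ x) → ∀ x, f x = x}.Nonempty :=
    ⟨Nat.card V, Finite.equivFin V, fun f hf x => (Finite.equivFin V).injective (hf x)⟩
  obtain ⟨φ, hφ⟩ : ∃ φ : V → Fin (distinguishingNumber G),
      ∀ f : G ≃g G, (∀ x, φ (f x) = φ x) → ∀ x, f x = x := Nat.sInf_mem hne
  obtain ⟨ψ, hψ⟩ := exists_edgeStabilizer_eq_bot hG hcyc (vertexStabilizer_eq_bot_iff.2 hφ)
  refine Nat.sInf_le ⟨fun e => ψ e, fun f hf x => ?_⟩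
  have hfψ : f ∈ edgeStabilizer G ψ := fun u v huv => hf ⟨s(u, v), huv⟩
  rw [hψ, Subgroup.mem_bot] at hfψ
  rw [hfψ, RelIso.one_apply]

end Main

/-- If `G` is a finite connected simple graph on at least 3 vertices with
`D'(G) = D(G) + 1`, then `G` is acyclic (hence a tree). -/
theorem isAcyclic_of_distinguishingIndex_eq_distinguishingNumber_add_one
    {V : Type*} [Fintype V] (G : SimpleGraph V)
    (hconn : G.Connected) (hcard : 3 ≤ Fintype.card V)
    (h : distinguishingIndex G = distinguishingNumber G + 1) :
    G.IsAcyclic := by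
  by_contra hcyc
  have hle := distinguishingIndex_le_distinguishingNumber hconn hcyc
  omega
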